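/- Let n > 1 be an odd integer. There exist infinitely many pairwise non-isomorphic number fields K with the following properties: there is a positive integer y with y ≡ 5 (mod 12) and y not divisible by 5 such that the polynomial x⁴ + ((yⁿ+7)/6)x³ − 6x² − ((yⁿ+7)/6)x + 1 is irreducible over ℚ and K is its splitting field; K is a totally real Galois extension of ℚ of degree 4 with Galois group isomorphic to ℤ/4ℤ; and rank_n Cl(K) ≥ 3. -/

import Mathlib

open Polynomial NumberField

/-- `M` contains a subgroup isomorphic to `(ℤ/nℤ)^s`, i.e. `rank_n M ≥ s`. -/
def HasZModRankGE (M : Type*) [CommGroup M] (n s : ℕ) : Prop :=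
  ∃ φ : (Multiplicative (Fin s → ZMod n)) →* M, Function.Injective φ

/-- A number field (here a subfield of `ℂ`) is totally real if all of its complex
embeddings take real values. -/
def TotallyReal (K : Type*) [Field K] : Prop :=
  ∀ (φ : K →+* ℂ) (x : K), (φ x).im = 0

namespace CQ
open Filter Topology ENNReal

/-- Weight of an ideal. -/
noncomputable def wt {R : Type*} [CommRing R] [IsDedekindDomain R] [Module.Free ℤ R] (s : ℝ) (I : Ideal R) : ℝ≥0∞ :=
  (((Ideal.absNorm I : NNReal) ^ (-s) : NNReal) : ℝ≥0∞)

lemma wt_mul {R : Type*} [CommRing R] [IsDedekindDomain R] [Module.Free ℤ R] (s : ℝ) (I J : Ideal R) :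
    wt s (I * J) = wt s I * wt s J := by
  simp [wt, NNReal.mul_rpow]

noncomputable def Z (K : Type*) [Field K] [NumberField K] (s : ℝ) : ℝ≥0∞ :=
  ∑' I : Ideal (𝓞 K), wt s I

lemma Z_eq (K : Type*) [Field K] [NumberField K] (s : ℝ) :
    Z K s = ∑' n : ℕ, ENNReal.ofReal ((Nat.card {I : Ideal (𝓞 K) // Ideal.absNorm I = n} : ℝ) *
      (n : ℝ) ^ (-s)) := by
  rw [Z, ← (Equiv.sigmaFiberEquiv (fun I : Ideal (𝓞 K) => Ideal.absNorm I)).tsum_eq,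
    ENNReal.tsum_sigma']
  congr 1
  ext n
  have : ∀ I : {I : Ideal (𝓞 K) // Ideal.absNorm I = n},
      wt s ((Equiv.sigmaFiberEquiv (fun I : Ideal (𝓞 K) => Ideal.absNorm I)) ⟨n, I⟩)
        = ENNReal.ofReal ((n : ℝ) ^ (-s)) := by
    rintro ⟨I, hI⟩
    simp only [Equiv.sigmaFiberEquiv, Equiv.coe_fn_mk, wt, hI]
    rw [ENNReal.ofReal, Real.toNNReal_rpow_of_nonneg (by positivity)]
    simp
  rw [tsum_congr this]
  have hf : Finite {I : Ideal (𝓞 K) // Ideal.absNorm I = n} :=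
    Ideal.finite_setOfPred_absNorm_eq n
  rw [ENNReal.tsum_const, ENNReal.ofReal_mul (by positivity)]
  congr 1
  simp only [ENNReal.ofReal_natCast]
  rw [ENat.card_eq_coe_natCard]
  rfl

lemma Z_lim (K : Type*) [Field K] [NumberField K] :
    Tendsto (fun s : ℝ => ENNReal.ofReal (s - 1) * Z K s) (𝓝[>] 1)
      (𝓝 (ENNReal.ofReal (dedekindZeta_residue K))) := by
  have h := tendsto_sub_one_mul_dedekindZeta_nhdsGT K
  have hne : ∀ᶠ s : ℝ in 𝓝[>] 1, ((s - 1 : ℂ) * dedekindZeta K s) ≠ 0 :=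
    h.eventually_ne (by exact_mod_cast dedekindZeta_residue_ne_zero K)
  have h2 : Tendsto (fun s : ℝ => ENNReal.ofReal (((s - 1 : ℂ) * dedekindZeta K s).re)) (𝓝[>] 1)
      (𝓝 (ENNReal.ofReal (dedekindZeta_residue K))) := by
    refine (ENNReal.continuous_ofReal.tendsto _).comp ?_
    exact (Complex.continuous_re.tendsto _).comp h
  refine h2.congr' ?_
  filter_upwards [hne, self_mem_nhdsWithin] with s hs hs1
  replace hs1 : 1 < s := hs1
  set a : ℕ → ℕ := fun n => Nat.card {I : Ideal (𝓞 K) // Ideal.absNorm I = n} with ha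
  set b : ℕ → ℝ := fun n => (a n : ℝ) * (n : ℝ) ^ (-s) with hb
  have hterm : ∀ n, LSeries.term (fun n => (a n : ℂ)) s n = ((b n : ℝ) : ℂ) := by
    intro n
    rcases eq_or_ne n 0 with rfl | hn
    · simp [hb, Real.zero_rpow (show -s ≠ 0 by linarith)]
    · rw [LSeries.term_of_ne_zero hn, hb]
      push_cast
      rw [Complex.ofReal_cpow (by positivity)]
      push_cast
      rw [Complex.cpow_neg]
      rfl
  have hz : dedekindZeta K s = ((∑' n, b n : ℝ) : ℂ) := by
    rw [dedekindZeta, LSeries, Complex.ofReal_tsum]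
    exact tsum_congr hterm
  have hsum : Summable b := by
    by_contra hc
    apply hs
    rw [hz, tsum_eq_zero_of_not_summable hc]
    simp
  have hb0 : ∀ n, 0 ≤ b n := fun n => by positivity
  rw [Z_eq K s, ← ENNReal.ofReal_tsum_of_nonneg hb0 hsum,
    ← ENNReal.ofReal_mul (by linarith), hz]
  congr 1
  rw [← Complex.ofReal_one, ← Complex.ofReal_sub, ← Complex.ofReal_mul, Complex.ofReal_re]

end CQ

namespace CQ
open Filter Topology ENNReal UniqueFactorizationMonoid

/-- partial zeta, over nonzero ideals not divisible by primes in `T`. -/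
noncomputable def ZT (K : Type*) [Field K] [NumberField K] (T : Finset (Ideal (𝓞 K))) (s : ℝ) : ℝ≥0∞ :=
  ∑' I : {I : Ideal (𝓞 K) // I ≠ ⊥ ∧ ∀ P ∈ T, ¬ P ∣ I}, wt s I.1

lemma wt_bot {R : Type*} [CommRing R] [IsDedekindDomain R] [Module.Free ℤ R] (s : ℝ) (hs : 1 < s) :
    wt s (⊥ : Ideal R) = 0 := by
  simp only [wt, Ideal.absNorm_bot]
  simp [NNReal.zero_rpow (show -s ≠ 0 by linarith)]

lemma ZT_le (K : Type*) [Field K] [NumberField K] (T : Finset (Ideal (𝓞 K))) (s : ℝ) :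
    ZT K T s ≤ Z K s := ENNReal.tsum_comp_le_tsum_of_injective Subtype.val_injective _

lemma Z_le_ZT_empty (K : Type*) [Field K] [NumberField K] (s : ℝ) (hs : 1 < s) :
    Z K s ≤ ZT K ∅ s := by
  classical
  have : ZT K ∅ s = ∑' I : {I : Ideal (𝓞 K) | I ≠ ⊥}, wt s I.1 := by
    rw [ZT]
    refine Equiv.tsum_eq (Equiv.subtypeEquivRight (fun I => ?_)) (fun I : {I : Ideal (𝓞 K) | I ≠ ⊥} => wt s I.1)
    simp
  rw [this, tsum_subtype, Z]
  refine ENNReal.tsum_le_tsum fun I => ?_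
  by_cases h : I = ⊥
  · rw [h, wt_bot s hs]; exact zero_le
  · rw [Set.indicator_of_mem (show I ∈ {I : Ideal (𝓞 K) | I ≠ ⊥} from h)]

lemma wt_prime_le {R : Type*} [CommRing R] [IsDedekindDomain R] [Module.Free ℤ R] [Module.Finite ℤ R]
    (s : ℝ) (hs : 1 < s) (P : Ideal R) (hP : P ≠ ⊤) :
    wt s P ≤ 2⁻¹ := by
  by_cases h0 : Ideal.absNorm P = 0
  · simp [wt, h0, NNReal.zero_rpow (show -s ≠ 0 by linarith)]
  have h2 : 2 ≤ Ideal.absNorm P := by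
    have : Ideal.absNorm P ≠ 1 := by rwa [Ne, Ideal.absNorm_eq_one_iff]
    omega
  rw [wt]
  have : ((Ideal.absNorm P : NNReal) ^ (-s)) ≤ 2⁻¹ := by
    have hx : (2 : NNReal) ≤ Ideal.absNorm P := by exact_mod_cast h2
    rw [NNReal.rpow_neg]
    gcongr
    calc (2 : NNReal) ≤ Ideal.absNorm P := hx
      _ = (Ideal.absNorm P : NNReal) ^ (1:ℝ) := by simp
      _ ≤ _ := NNReal.rpow_le_rpow_of_exponent_le (le_trans (by norm_num) hx) hs.le
  calc _ ≤ ((2⁻¹ : NNReal) : ℝ≥0∞) := by exact_mod_cast this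
    _ = _ := by simp [ENNReal.coe_inv]

lemma ZT_insert (K : Type*) [Field K] [NumberField K] (T : Finset (Ideal (𝓞 K))) (s : ℝ)
    (hs : 1 < s) (P : Ideal (𝓞 K)) [DecidableEq (Ideal (𝓞 K))] (hP : Prime P) (hfin : Z K s ≠ ⊤) (hT : ∀ Q ∈ T, Prime Q) :
    ZT K T s ≤ 2 * ZT K (insert P T) s := by
  have key : ZT K T s ≤ ZT K (insert P T) s + 2⁻¹ * ZT K T s := by
    by_cases hPT : P ∈ T
    · rw [Finset.insert_eq_of_mem hPT]; exact le_self_add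
    set A : Set (Ideal (𝓞 K)) := {I | I ≠ ⊥ ∧ ∀ Q ∈ T, ¬ Q ∣ I}
    set B : Set (Ideal (𝓞 K)) := {I | I ≠ ⊥ ∧ ∀ Q ∈ insert P T, ¬ Q ∣ I}
    have hsub : A ⊆ B ∪ ((fun I => P * I) '' A) := by
      rintro I ⟨h0, hI⟩
      by_cases hPI : P ∣ I
      · right
        obtain ⟨J, rfl⟩ := hPI
        refine ⟨J, ⟨?_, ?_⟩, rfl⟩
        · rintro rfl; simp at h0
        · intro Q hQ hd; exact hI Q hQ (hd.mul_left P)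
      · left
        refine ⟨h0, ?_⟩
        intro Q hQ
        rcases Finset.mem_insert.mp hQ with rfl | h
        · exact hPI
        · exact hI Q h
    have hinj : Function.Injective (fun I : Ideal (𝓞 K) => P * I) :=
      fun I J h => mul_left_cancel₀ hP.ne_zero h
    calc ZT K T s = ∑' I : A, wt s I.1 := rfl
      _ ≤ ∑' I : (B ∪ ((fun I => P * I) '' A) : Set (Ideal (𝓞 K))), wt s I.1 :=
          ENNReal.tsum_mono_subtype _ hsub
      _ ≤ (∑' I : B, wt s I.1) + ∑' I : ((fun I => P * I) '' A), wt s I.1 :=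
          ENNReal.tsum_union_le _ _ _
      _ = ZT K (insert P T) s + ∑' I : A, wt s (P * I.1) := by
          congr 1
          exact tsum_image (fun I => wt s I) hinj.injOn
      _ = ZT K (insert P T) s + wt s P * ZT K T s := by
          congr 1
          simp_rw [wt_mul]
          rw [ENNReal.tsum_mul_left]
          rfl
      _ ≤ _ := by
          gcongr
          exact wt_prime_le s hs P (fun h => hP.not_isUnit (by rw [h]; exact Ideal.isUnit_iff.mpr rfl))
  have hT' : ZT K T s ≠ ⊤ := ne_top_of_le_ne_top hfin (ZT_le K T s)
  set a := ZT K T s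
  set b := ZT K (insert P T) s
  have h2 : a = 2⁻¹ * a + 2⁻¹ * a := by
    rw [← add_mul, ENNReal.inv_two_add_inv_two, one_mul]
  have h3 : 2⁻¹ * a ≤ b := by
    have hne : 2⁻¹ * a ≠ ⊤ := ENNReal.mul_ne_top (by simp) hT'
    have : 2⁻¹ * a + 2⁻¹ * a ≤ b + 2⁻¹ * a := h2 ▸ key
    exact (ENNReal.add_le_add_iff_right hne).mp this
  calc a = 2 * (2⁻¹ * a) := by
        rw [← mul_assoc, ENNReal.mul_inv_cancel (by simp) (by simp), one_mul]
    _ ≤ 2 * b := by gcongr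

lemma Z_le_ZT (K : Type*) [Field K] [NumberField K] (s : ℝ)
    (hs : 1 < s) (hfin : Z K s ≠ ⊤) (T : Finset (Ideal (𝓞 K))) (hT : ∀ Q ∈ T, Prime Q) :
    Z K s ≤ 2 ^ T.card * ZT K T s := by
  classical
  induction T using Finset.induction_on with
  | empty => simpa using Z_le_ZT_empty K s hs
  | insert P T hPT ih =>
    rw [Finset.card_insert_of_notMem hPT, pow_succ, mul_assoc]
    refine (ih fun Q hQ => hT Q (Finset.mem_insert_of_mem hQ)).trans ?_
    gcongr
    exact ZT_insert K T s hs P (hT P (Finset.mem_insert_self _ _)) hfin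
      fun Q hQ => hT Q (Finset.mem_insert_of_mem hQ)

lemma wt_map_prod {R S : Type*} [CommRing R] [IsDedekindDomain R] [Module.Free ℤ R]
    [CommRing S] [IsDedekindDomain S] [Module.Free ℤ S] (s : ℝ) (f : Ideal R → Ideal S)
    (m : Multiset (Ideal R)) (h : ∀ P ∈ m, Ideal.absNorm (f P) = Ideal.absNorm P) :
    Ideal.absNorm ((m.map f).prod) = Ideal.absNorm m.prod := by
  rw [map_multiset_prod, map_multiset_prod, Multiset.map_map]
  congr 1
  exact Multiset.map_congr rfl h

lemma ZT_sq_le (F M : Type*) [Field F] [NumberField F] [Field M] [NumberField M] [Algebra F M]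
    (T : Finset (Ideal (𝓞 F))) (s : ℝ)
    (hT : ∀ P : Ideal (𝓞 F), Prime P → P ∉ T → ∃ Q₁ Q₂ : Ideal (𝓞 M), Q₁ ≠ Q₂ ∧
      Prime Q₁ ∧ Prime Q₂ ∧ Q₁.comap (algebraMap (𝓞 F) (𝓞 M)) = P ∧
      Q₂.comap (algebraMap (𝓞 F) (𝓞 M)) = P ∧ Ideal.absNorm Q₁ = Ideal.absNorm P ∧
      Ideal.absNorm Q₂ = Ideal.absNorm P) :
    ZT F T s * ZT F T s ≤ Z M s := by
  classical
  have hT' : ∀ P : Ideal (𝓞 F), ∃ Q₁ Q₂ : Ideal (𝓞 M), Prime P → P ∉ T → Q₁ ≠ Q₂ ∧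
      Prime Q₁ ∧ Prime Q₂ ∧ Q₁.comap (algebraMap (𝓞 F) (𝓞 M)) = P ∧
      Q₂.comap (algebraMap (𝓞 F) (𝓞 M)) = P ∧ Ideal.absNorm Q₁ = Ideal.absNorm P ∧
      Ideal.absNorm Q₂ = Ideal.absNorm P := by
    intro P
    by_cases h : Prime P ∧ P ∉ T
    · obtain ⟨Q₁, Q₂, hh⟩ := hT P h.1 h.2
      exact ⟨Q₁, Q₂, fun _ _ => hh⟩
    · exact ⟨⊥, ⊥, fun h1 h2 => absurd ⟨h1, h2⟩ h⟩
  choose f g hfg using hT'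
  let c : Ideal (𝓞 M) → Ideal (𝓞 F) := fun Q => Q.comap (algebraMap (𝓞 F) (𝓞 M))
  let A := {I : Ideal (𝓞 F) // I ≠ ⊥ ∧ ∀ P ∈ T, ¬ P ∣ I}
  let nf : Ideal (𝓞 F) → Multiset (Ideal (𝓞 F)) := fun I => normalizedFactors I
  have hprod : ∀ I : A, (nf I.1).prod = I.1 := fun I => Ideal.prod_normalizedFactors_eq_self I.2.1
  have hgood : ∀ I : A, ∀ P ∈ nf I.1, Prime P ∧ P ∉ T := fun I P hP =>
    ⟨prime_of_normalized_factor P hP, fun h => I.2.2 P h (dvd_of_mem_normalizedFactors hP)⟩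
  let Φ : A × A → Ideal (𝓞 M) := fun x => ((nf x.1.1).map f).prod * ((nf x.2.1).map g).prod
  have hnfΦ : ∀ x : A × A, normalizedFactors (Φ x) = (nf x.1.1).map f + (nf x.2.1).map g := by
    intro x
    have : Φ x = ((nf x.1.1).map f + (nf x.2.1).map g).prod := by rw [Multiset.prod_add]
    rw [this]
    refine normalizedFactors_prod_of_prime ?_
    intro Q hQ
    rcases Multiset.mem_add.mp hQ with h | h
    · obtain ⟨P, hP, rfl⟩ := Multiset.mem_map.mp h
      exact (hfg P (hgood _ P hP).1 (hgood _ P hP).2).2.1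
    · obtain ⟨P, hP, rfl⟩ := Multiset.mem_map.mp h
      exact (hfg P (hgood _ P hP).1 (hgood _ P hP).2).2.2.1
  have hrec1 : ∀ x : A × A, nf x.1.1 =
      ((normalizedFactors (Φ x)).filter (fun Q => Q = f (c Q))).map c := by
    intro x
    rw [hnfΦ, Multiset.filter_add, Multiset.filter_eq_self.mpr, Multiset.filter_eq_nil.mpr,
      add_zero, Multiset.map_map]
    · conv_lhs => rw [← Multiset.map_id (nf x.1.1)]
      refine Multiset.map_congr rfl fun P hP => ?_
      exact ((hfg P (hgood _ P hP).1 (hgood _ P hP).2).2.2.2.1).symm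
    · intro Q hQ
      obtain ⟨P, hP, rfl⟩ := Multiset.mem_map.mp hQ
      have h := hfg P (hgood _ P hP).1 (hgood _ P hP).2
      have h1 : c (g P) = P := h.2.2.2.2.1
      rw [h1]
      exact h.1.symm
    · intro Q hQ
      obtain ⟨P, hP, rfl⟩ := Multiset.mem_map.mp hQ
      have h := hfg P (hgood _ P hP).1 (hgood _ P hP).2
      have h1 : c (f P) = P := h.2.2.2.1
      rw [h1]
  have hrec2 : ∀ x : A × A, nf x.2.1 =
      ((normalizedFactors (Φ x)).filter (fun Q => Q = g (c Q))).map c := by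
    intro x
    rw [hnfΦ, Multiset.filter_add, add_comm, Multiset.filter_eq_self.mpr, Multiset.filter_eq_nil.mpr,
      add_zero, Multiset.map_map]
    · conv_lhs => rw [← Multiset.map_id (nf x.2.1)]
      refine Multiset.map_congr rfl fun P hP => ?_
      exact ((hfg P (hgood _ P hP).1 (hgood _ P hP).2).2.2.2.2.1).symm
    · intro Q hQ
      obtain ⟨P, hP, rfl⟩ := Multiset.mem_map.mp hQ
      have h := hfg P (hgood _ P hP).1 (hgood _ P hP).2
      have h1 : c (f P) = P := h.2.2.2.1
      rw [h1]
      exact h.1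
    · intro Q hQ
      obtain ⟨P, hP, rfl⟩ := Multiset.mem_map.mp hQ
      have h := hfg P (hgood _ P hP).1 (hgood _ P hP).2
      have h1 : c (g P) = P := h.2.2.2.2.1
      rw [h1]
  have hinj : Function.Injective Φ := by
    intro x x' h
    have e1 : nf x.1.1 = nf x'.1.1 := by rw [hrec1 x, hrec1 x', h]
    have e2 : nf x.2.1 = nf x'.2.1 := by rw [hrec2 x, hrec2 x', h]
    apply Prod.ext
    · apply Subtype.ext
      rw [← hprod x.1, ← hprod x'.1, e1]
    · apply Subtype.ext
      rw [← hprod x.2, ← hprod x'.2, e2]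
  have hw : ∀ x : A × A, wt s (Φ x) = wt s x.1.1 * wt s x.2.1 := by
    intro x
    rw [wt_mul]
    congr 1
    · rw [wt, wt_map_prod s f (nf x.1.1), hprod, wt]
      intro P hP
      exact (hfg P (hgood _ P hP).1 (hgood _ P hP).2).2.2.2.2.2.1
    · rw [wt, wt_map_prod s g (nf x.2.1), hprod, wt]
      intro P hP
      exact (hfg P (hgood _ P hP).1 (hgood _ P hP).2).2.2.2.2.2.2
  calc ZT F T s * ZT F T s = ∑' x : A × A, wt s x.1.1 * wt s x.2.1 := by
        rw [ENNReal.tsum_prod (f := fun (a b : A) => wt s a.1 * wt s b.1)]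
        simp_rw [ENNReal.tsum_mul_left]
        rw [ENNReal.tsum_mul_right]
        rfl
    _ = ∑' x : A × A, wt s (Φ x) := by simp_rw [hw]
    _ ≤ Z M s := ENNReal.tsum_comp_le_tsum_of_injective hinj _

/-- Not almost all primes of `F` split into at least two degree-one primes of `M`. -/
lemma not_all_split (F M : Type*) [Field F] [NumberField F] [Field M] [NumberField M] [Algebra F M]
    (T : Finset (Ideal (𝓞 F))) (hTp : ∀ Q ∈ T, Prime Q)
    (hT : ∀ P : Ideal (𝓞 F), Prime P → P ∉ T → ∃ Q₁ Q₂ : Ideal (𝓞 M), Q₁ ≠ Q₂ ∧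
      Prime Q₁ ∧ Prime Q₂ ∧ Q₁.comap (algebraMap (𝓞 F) (𝓞 M)) = P ∧
      Q₂.comap (algebraMap (𝓞 F) (𝓞 M)) = P ∧ Ideal.absNorm Q₁ = Ideal.absNorm P ∧
      Ideal.absNorm Q₂ = Ideal.absNorm P) : False := by
  have hF := Z_lim F
  have hM := Z_lim M
  have hcF : ENNReal.ofReal (dedekindZeta_residue F) ≠ 0 := by
    simpa using dedekindZeta_residue_pos F
  have hlim1 : Tendsto (fun s : ℝ => ENNReal.ofReal (s - 1)) (𝓝[>] 1) (𝓝 0) := by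
    have : Tendsto (fun s : ℝ => ENNReal.ofReal (s - 1)) (𝓝 1) (𝓝 (ENNReal.ofReal (1 - 1))) :=
      (ENNReal.continuous_ofReal.comp (continuous_id.sub continuous_const)).tendsto 1
    simp only [sub_self, ENNReal.ofReal_zero] at this
    exact this.mono_left nhdsWithin_le_nhds
  have hL : Tendsto (fun s : ℝ => (ENNReal.ofReal (s - 1) * Z F s) * (ENNReal.ofReal (s - 1) * Z F s))
      (𝓝[>] 1) (𝓝 (ENNReal.ofReal (dedekindZeta_residue F) * ENNReal.ofReal (dedekindZeta_residue F))) :=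
    ENNReal.Tendsto.mul hF (Or.inl hcF) hF (Or.inl hcF)
  have hR : Tendsto (fun s : ℝ => (2 ^ T.card * 2 ^ T.card) * (ENNReal.ofReal (s - 1) * (ENNReal.ofReal (s - 1) * Z M s)))
      (𝓝[>] 1) (𝓝 0) := by
    have h1 := ENNReal.Tendsto.mul hlim1 (Or.inr ENNReal.ofReal_ne_top) hM (Or.inr (by simp))
    have h2 := ENNReal.Tendsto.const_mul (a := (2 ^ T.card * 2 ^ T.card : ℝ≥0∞)) h1 (Or.inr (by finiteness))
    simpa using h2
  have hfin : ∀ᶠ s : ℝ in 𝓝[>] 1, ENNReal.ofReal (s - 1) * Z F s ≠ ⊤ :=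
    hF.eventually_ne ENNReal.ofReal_ne_top
  have hle : ∀ᶠ s : ℝ in 𝓝[>] 1,
      (ENNReal.ofReal (s - 1) * Z F s) * (ENNReal.ofReal (s - 1) * Z F s) ≤
      (2 ^ T.card * 2 ^ T.card) * (ENNReal.ofReal (s - 1) * (ENNReal.ofReal (s - 1) * Z M s)) := by
    filter_upwards [hfin, self_mem_nhdsWithin] with s hs hs1
    replace hs1 : 1 < s := hs1
    have hZ : Z F s ≠ ⊤ := by
      intro h
      apply hs
      rw [h, ENNReal.mul_top]
      simpa using hs1
    have h1 := Z_le_ZT F s hs1 hZ T hTp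
    have h2 := ZT_sq_le F M T s hT
    set e := ENNReal.ofReal (s - 1)
    calc e * Z F s * (e * Z F s) ≤ e * (2 ^ T.card * ZT F T s) * (e * (2 ^ T.card * ZT F T s)) := by
          gcongr
      _ = (2 ^ T.card * 2 ^ T.card) * (e * (e * (ZT F T s * ZT F T s))) := by ring
      _ ≤ _ := by gcongr
  have := le_of_tendsto_of_tendsto hL hR hle
  simp only [nonpos_iff_eq_zero, mul_self_eq_zero] at this
  exact hcF this

end CQ

namespace CQ
open Filter Topology ENNReal UniqueFactorizationMonoid
open scoped Pointwise

lemma split_of_kummer (F M : Type) [Field F] [NumberField F] [Field M] [NumberField M] [Algebra F M]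
    [IsGalois F M] (p : ℕ) (hp : p.Prime) (hcard : Nat.card (M ≃ₐ[F] M) = p)
    (ζ : 𝓞 F) (hζ : IsPrimitiveRoot ζ p) (θ : 𝓞 M) (m : ℕ) (hθ : θ ^ p = (m : 𝓞 M))
    (g : M ≃ₐ[F] M) (hg : g • θ = algebraMap (𝓞 F) (𝓞 M) ζ * θ)
    (P : Ideal (𝓞 F)) (hP : Prime P) (b : ℤ) (hb : (b : 𝓞 F) ^ p - (m : 𝓞 F) ∈ P)
    (hmP : (m : 𝓞 F) ∉ P) (hpP : (p : 𝓞 F) ∉ P) :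
    ∃ Q₁ Q₂ : Ideal (𝓞 M), Q₁ ≠ Q₂ ∧ Prime Q₁ ∧ Prime Q₂ ∧
     Q₁.comap (algebraMap (𝓞 F) (𝓞 M)) = P ∧ Q₂.comap (algebraMap (𝓞 F) (𝓞 M)) = P ∧
     Ideal.absNorm Q₁ = Ideal.absNorm P ∧ Ideal.absNorm Q₂ = Ideal.absNorm P := by
  have : NeZero p := ⟨hp.ne_zero⟩
  have hPp : P.IsPrime := Ideal.isPrime_of_prime hP
  have hP0 : P ≠ ⊥ := hP.ne_zero
  have hPm : P.IsMaximal := hPp.isMaximal hP0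
  have hfund := Ideal.ncard_primesOver_mul_ramificationIdxIn_mul_inertiaDegIn P (𝓞 M) (M ≃ₐ[F] M)
  rw [hcard] at hfund
  have hfinP : (P.primesOver (𝓞 M)).Finite := Algebra.QuasiFinite.finite_primesOver P
  have hinj : Function.Injective (algebraMap (𝓞 F) (𝓞 M)) := FaithfulSMul.algebraMap_injective _ _
  have hne1 : (P.primesOver (𝓞 M)).ncard ≠ 1 := by
    intro h1
    rw [Set.ncard_eq_one] at h1
    obtain ⟨Q, hQ⟩ := h1
    have hQm : Q ∈ P.primesOver (𝓞 M) := by rw [hQ]; rfl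
    have hQp : Q.IsPrime := hQm.1
    have hQo : Q.LiesOver P := hQm.2
    have hgQ : g • Q = Q := by
      have : g • Q ∈ P.primesOver (𝓞 M) := by
        refine ⟨?_, ?_⟩ <;> infer_instance
      rw [hQ] at this
      exact this
    have hcomap : ∀ a : 𝓞 F, algebraMap (𝓞 F) (𝓞 M) a ∈ Q ↔ a ∈ P := by
      intro a
      rw [hQo.over, Ideal.mem_comap]
    have hζM : IsPrimitiveRoot (algebraMap (𝓞 F) (𝓞 M) ζ) p := hζ.map_of_injective hinj
    have hprod := hζM.pow_sub_pow_eq_prod_sub_mul θ (b : 𝓞 M) hp.pos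
    have hmem : θ ^ p - (b : 𝓞 M) ^ p ∈ Q := by
      have := (hcomap _).2 hb
      rw [← neg_mem_iff]
      simpa [hθ] using this
    rw [hprod, hQp.prod_mem_iff] at hmem
    obtain ⟨i, hi, hmem⟩ := hmem
    have hmem2 : g • (θ - i * (b : 𝓞 M)) ∈ Q := by
      rw [← hgQ]; exact Ideal.smul_mem_pointwise_smul _ _ _ hmem
    have hip : i ^ p = 1 := by
      rw [Polynomial.mem_nthRootsFinset hp.pos] at hi; exact hi
    obtain ⟨j, hj, rfl⟩ := hζM.eq_pow_of_pow_eq_one hip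
    have hgz : ∀ a : 𝓞 F, g • algebraMap (𝓞 F) (𝓞 M) a = algebraMap (𝓞 F) (𝓞 M) a := by
      intro a; exact smul_algebraMap g a
    have hgb : g • (b : 𝓞 M) = (b : 𝓞 M) := by
      have := hgz (b : 𝓞 F); simpa using this
    rw [smul_sub, smul_mul', hg, hgb, ← map_pow, hgz] at hmem2
    rw [← map_pow] at hmem
    have h3 : algebraMap (𝓞 F) (𝓞 M) (ζ ^ j * (ζ - 1) * b) ∈ Q := by
      have := Q.sub_mem (Q.mul_mem_left (algebraMap (𝓞 F) (𝓞 M) ζ) hmem) hmem2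
      convert Q.neg_mem this using 1
      simp only [map_mul, map_sub, map_one, map_intCast, map_pow]
      ring
    rw [hcomap] at h3
    rcases hPp.mem_or_mem h3 with h4 | h4
    · rcases hPp.mem_or_mem h4 with h5 | h5
      · apply hPp.one_notMem
        have h6 := hPp.mem_of_pow_mem _ h5
        have h7 := P.pow_mem_of_mem h6 p hp.pos
        rwa [hζ.pow_eq_one] at h7
      · apply hpP
        have hg0 : ∑ i ∈ Finset.range p, ζ ^ i = 0 := hζ.geom_sum_eq_zero hp.one_lt
        have : (p : 𝓞 F) = - ∑ i ∈ Finset.range p, (ζ ^ i - 1) := by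
          simp [Finset.sum_sub_distrib, hg0]
        rw [this]
        apply P.neg_mem
        apply P.sum_mem
        intro i _
        exact P.mem_of_dvd (sub_one_dvd_pow_sub_one ζ i) h5
    · apply hmP
      have h5 := P.pow_mem_of_mem h4 p hp.pos
      have := P.sub_mem h5 hb
      simpa using this
  have hncp : (P.primesOver (𝓞 M)).ncard = p := by
    have hd : (P.primesOver (𝓞 M)).ncard ∣ p := ⟨_, hfund.symm⟩
    exact (hp.eq_one_or_self_of_dvd _ hd).resolve_left hne1
  have hf : Ideal.inertiaDegIn P (𝓞 M) = 1 := by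
    rw [hncp] at hfund
    have : Ideal.ramificationIdxIn P (𝓞 M) * Ideal.inertiaDegIn P (𝓞 M) = 1 := by
      apply Nat.eq_of_mul_eq_mul_left hp.pos; rw [hfund, mul_one]
    exact Nat.eq_one_of_mul_eq_one_left this
  have hnorm : ∀ Q ∈ P.primesOver (𝓞 M), Prime Q ∧ Q.comap (algebraMap (𝓞 F) (𝓞 M)) = P ∧
      Ideal.absNorm Q = Ideal.absNorm P := by
    intro Q hQm
    have hQp : Q.IsPrime := hQm.1
    have hQo : Q.LiesOver P := hQm.2
    have hQ0 : Q ≠ ⊥ := Ideal.ne_bot_of_liesOver_of_ne_bot hP0 Q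
    have hQmax : Q.IsMaximal := hQp.isMaximal hQ0
    refine ⟨Ideal.prime_of_isPrime hQ0 hQp, hQo.over.symm, ?_⟩
    have h1 := Ideal.inertiaDegIn_eq_inertiaDeg P Q (M ≃ₐ[F] M)
    rw [hf] at h1
    have h2 := Ideal.absNorm_eq_pow_inertiaDeg'_of_liesOver Q P hPp hP0
    rw [Ideal.inertiaDeg'_eq_inertiaDeg, ← h1, pow_one] at h2
    exact h2
  obtain ⟨Q₁, h₁, Q₂, h₂, hne⟩ := (Set.one_lt_ncard hfinP).1 (by rw [hncp]; exact hp.one_lt)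
  exact ⟨Q₁, Q₂, hne, (hnorm _ h₁).1, (hnorm _ h₂).1, (hnorm _ h₁).2.1, (hnorm _ h₂).2.1,
    (hnorm _ h₁).2.2, (hnorm _ h₂).2.2⟩

lemma key (p : ℕ) (hp : p.Prime) (m : ℕ) (hm0 : m ≠ 0) (hm : ∀ b : ℚ, b ^ p ≠ m) (N : ℕ)
    (hN : N ≠ 0) : ∃ q : ℕ, q.Prime ∧ ¬ q ∣ N ∧ ∀ z : ZMod q, z ^ p ≠ (m : ZMod q) := by
  by_contra hcon
  push Not at hcon
  have : NeZero p := ⟨hp.ne_zero⟩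
  have : Fact p.Prime := ⟨hp⟩
  let F := CyclotomicField p ℚ
  have hcyc : IsCyclotomicExtension {p} ℚ F := CyclotomicField.isCyclotomicExtension p ℚ
  have hFfin : Module.finrank ℚ F = p - 1 := by
    rw [IsCyclotomicExtension.finrank (n := p) F (cyclotomic.irreducible_rat hp.pos),
      Nat.totient_prime hp]
  have hmF : ∀ b : F, b ^ p ≠ (m : F) := by
    intro b hb
    have hirr : Irreducible (X ^ p - C (m : ℚ)) := X_pow_sub_C_irreducible_of_prime hp hm
    have hmin : minpoly ℚ b = X ^ p - C (m : ℚ) := by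
      symm
      apply minpoly.eq_of_irreducible_of_monic hirr
      · simp [hb]
      · exact monic_X_pow_sub_C _ hp.ne_zero
    have hd := minpoly.degree_dvd (K := ℚ) (x := b) (IsIntegral.of_finite ℚ b)
    rw [hmin, natDegree_X_pow_sub_C, hFfin] at hd
    have := Nat.le_of_dvd (by have := hp.two_le; omega) hd
    have := hp.two_le
    omega
  have H : Irreducible (X ^ p - C (m : F)) := X_pow_sub_C_irreducible_of_prime hp hmF
  let M := SplittingField (X ^ p - C (m : F))
  have hchar : CharZero M := charZero_of_injective_algebraMap (algebraMap F M).injective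
  have : NumberField M := NumberField.of_module_finite F M
  have hz : IsPrimitiveRoot (IsCyclotomicExtension.zeta p ℚ F) p :=
    IsCyclotomicExtension.zeta_spec p ℚ F
  have hne : (primitiveRoots p F).Nonempty := ⟨_, (mem_primitiveRoots hp.pos).2 hz⟩
  have : IsGalois F M := isGalois_of_isSplittingField_X_pow_sub_C hne H M
  have hdeg := finrank_of_isSplittingField_X_pow_sub_C hne H M
  have hα := rootOfSplitsXPowSubC_pow (m : F) M (n := p)
  set α := rootOfSplitsXPowSubC (NeZero.pos p) (m : F) M with hαdef
  have hgα := autEquivZmod_symm_apply_natCast H M hα hz 1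
  set g := (autEquivZmod H M hz).symm (Multiplicative.ofAdd ((1 : ℕ) : ZMod p)) with hgdef
  have hαm : α ^ p = (m : M) := hα.trans (map_natCast (algebraMap F M) m)
  have hαint : IsIntegral ℤ α := by
    refine IsIntegral.of_pow hp.pos ?_
    rw [hαm]
    exact isIntegral_natCast _
  let θ : 𝓞 M := ⟨α, hαint⟩
  have hz' : IsPrimitiveRoot hz.toInteger p := hz.toInteger_isPrimitiveRoot
  let T : Finset (Ideal (𝓞 F)) :=
    (normalizedFactors (Ideal.span {((N * p * m : ℕ) : 𝓞 F)})).toFinset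
  have hspan0 : Ideal.span {((N * p * m : ℕ) : 𝓞 F)} ≠ 0 := by
    simp [hN, hp.ne_zero, hm0]
  refine not_all_split F M T ?_ ?_
  · intro Q hQ
    rw [Multiset.mem_toFinset] at hQ
    exact prime_of_normalized_factor _ hQ
  · intro P hP hPT
    have hPp : P.IsPrime := Ideal.isPrime_of_prime hP
    have hnot : ((N * p * m : ℕ) : 𝓞 F) ∉ P := by
      intro hmem
      apply hPT
      rw [Multiset.mem_toFinset, Ideal.mem_normalizedFactors_iff hspan0]
      exact ⟨hPp, by rwa [Ideal.span_singleton_le_iff_mem]⟩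
    push_cast at hnot
    have hmP : (m : 𝓞 F) ∉ P := fun h => hnot (P.mul_mem_left _ h)
    have hpP : (p : 𝓞 F) ∉ P := fun h => hnot (P.mul_mem_right _ (P.mul_mem_left _ h))
    have hNP : (N : 𝓞 F) ∉ P := fun h => hnot (P.mul_mem_right _ (P.mul_mem_right _ h))
    have hPm : P.IsMaximal := hPp.isMaximal hP.ne_zero
    obtain ⟨q, hq⟩ := CharP.exists (𝓞 F ⧸ P)
    have hq0 : q ≠ 0 := by
      rintro rfl
      have : CharZero (𝓞 F ⧸ P) := CharP.charP_to_charZero _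
      have hfi : Finite (𝓞 F ⧸ P) := Ideal.finiteQuotientOfFreeOfNeBot P hP.ne_zero
      have hi : Infinite (𝓞 F ⧸ P) := CharZero.infinite _
      exact not_finite (𝓞 F ⧸ P)
    have hqp : q.Prime := (CharP.char_is_prime_or_zero (𝓞 F ⧸ P) q).resolve_right hq0
    have hmemn : ∀ a : ℤ, (a : 𝓞 F) ∈ P ↔ (q : ℤ) ∣ a := by
      intro a
      rw [← Ideal.Quotient.eq_zero_iff_mem, map_intCast, CharP.intCast_eq_zero_iff (𝓞 F ⧸ P) q]
    have hqN : ¬ q ∣ N := by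
      intro h
      apply hNP
      have := (hmemn N).2 (by exact_mod_cast h)
      simpa using this
    obtain ⟨z, hzz⟩ := hcon q hqp hqN
    obtain ⟨b, rfl⟩ := ZMod.intCast_surjective z
    have hb : (b : 𝓞 F) ^ p - (m : 𝓞 F) ∈ P := by
      have := (hmemn (b ^ p - m)).2 ((ZMod.intCast_zmod_eq_zero_iff_dvd _ q).1 (by
        push_cast; rw [hzz]; simp)) 
      simpa using this
    refine split_of_kummer F M p hp ?_ hz.toInteger hz' θ m ?_ g ?_ P hP b hb hmP hpP
    · rw [IsGalois.card_aut_eq_finrank, hdeg]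
    · apply RingOfIntegers.ext
      have h1 : ((θ ^ p : 𝓞 M) : M) = α ^ p := rfl
      rw [h1, hαm]
      exact (map_natCast (algebraMap (𝓞 M) M) m).symm
    · apply RingOfIntegers.ext
      change g α = _
      rw [hgα, pow_one, Algebra.smul_def]
      rfl
end CQ

namespace CQ

lemma val_aux (r : ℕ) (hr : r.Prime) (b : ℚ) (p a c d : ℕ) (u v : ℕ) (hu : u.Prime)
    (hv : v.Prime) (hur : u ≠ r) (hvr : v ≠ r)
    (h : b ^ p = ((r ^ a * (u ^ c * v ^ d) : ℕ) : ℚ)) : (p : ℤ) ∣ a := by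
  have : Fact r.Prime := ⟨hr⟩
  have := Fact.mk hu
  have := Fact.mk hv
  have hr0 := hr.ne_zero
  have hu0 := hu.ne_zero
  have hv0 := hv.ne_zero
  have h1 := congrArg (padicValRat r) h
  rw [padicValRat.pow, padicValRat.of_nat, padicValNat.mul (by positivity) (by positivity),
    padicValNat.mul (by positivity) (by positivity), padicValNat.prime_pow,
    padicValNat.pow, padicValNat.pow, padicValNat_primes hur.symm,
    padicValNat_primes hvr.symm] at h1
  simp at h1
  exact ⟨_, h1.symm⟩

lemma two_three_five (p : ℕ) (hp : p.Prime) : ∃ Q : Finset ℕ, (∀ q ∈ Q, q.Prime ∧ ¬ q ∣ 30) ∧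
    ∀ i j l : ℤ, (∀ q ∈ Q, ∀ _ : Fact q.Prime, ∃ z : ZMod q,
      z ^ p = (2 : ZMod q) ^ i * (3 : ZMod q) ^ j * (5 : ZMod q) ^ l) →
      (p : ℤ) ∣ i ∧ (p : ℤ) ∣ j ∧ (p : ℤ) ∣ l := by
  have h1 : ∀ t : Fin p × Fin p × Fin p, ∃ q : ℕ, q.Prime ∧ ¬ q ∣ 30 ∧
      (¬ (t.1.val = 0 ∧ t.2.1.val = 0 ∧ t.2.2.val = 0) →
      ∀ z : ZMod q, z ^ p ≠ ((2 ^ t.1.val * (3 ^ t.2.1.val * 5 ^ t.2.2.val) : ℕ) : ZMod q)) := by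
    rintro ⟨a, b, c⟩
    by_cases ht : (a.val = 0 ∧ b.val = 0 ∧ c.val = 0)
    · exact ⟨7, by norm_num, by norm_num, fun h => absurd ht h⟩
    · have hnot : ∀ x : ℚ, x ^ p ≠ ((2 ^ a.val * (3 ^ b.val * 5 ^ c.val) : ℕ) : ℚ) := by
        intro x hx
        have e1 := val_aux 2 (by norm_num) x p a b c 3 5 (by norm_num) (by norm_num)
          (by norm_num) (by norm_num) hx
        have e2 := val_aux 3 (by norm_num) x p b a c 2 5 (by norm_num) (by norm_num)
          (by norm_num) (by norm_num) (by rw [hx]; congr 1; ring)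
        have e3 := val_aux 5 (by norm_num) x p c a b 2 3 (by norm_num) (by norm_num)
          (by norm_num) (by norm_num) (by rw [hx]; congr 1; ring)
        have z : ∀ a : Fin p, (p : ℤ) ∣ (a.val : ℤ) → a.val = 0 := by
          intro a ha
          exact Nat.eq_zero_of_dvd_of_lt (by exact_mod_cast ha) a.2
        exact ht ⟨z _ e1, z _ e2, z _ e3⟩
      obtain ⟨q, hq1, hq2, hq3⟩ := key p hp (2 ^ a.val * (3 ^ b.val * 5 ^ c.val)) (by positivity)
        hnot 30 (by norm_num)
      exact ⟨q, hq1, hq2, fun _ => hq3⟩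
  choose f hf1 hf2 hf3 using h1
  refine ⟨Finset.univ.image f, ?_, ?_⟩
  · intro q hq
    obtain ⟨t, -, rfl⟩ := Finset.mem_image.1 hq
    exact ⟨hf1 t, hf2 t⟩
  · intro i j l h
    have hp0 : (0 : ℤ) < p := by exact_mod_cast hp.pos
    have hred : ∀ i : ℤ, ∃ a : Fin p, i = (a.val : ℤ) + p * (i / p) := by
      intro i
      refine ⟨⟨(i % p).toNat, ?_⟩, ?_⟩
      · have := Int.emod_lt_of_pos i hp0
        have := Int.emod_nonneg i hp0.ne'
        omega
      · have := Int.emod_nonneg i hp0.ne'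
        simp only
        rw [Int.toNat_of_nonneg this]
        exact (Int.emod_add_mul_ediv i p).symm
    obtain ⟨a, ha⟩ := hred i
    obtain ⟨b, hb⟩ := hred j
    obtain ⟨c, hc⟩ := hred l
    by_cases ht : (a.val = 0 ∧ b.val = 0 ∧ c.val = 0)
    · rw [ha, hb, hc, ht.1, ht.2.1, ht.2.2]
      simp
    · exfalso
      have hq1 := hf1 (a, b, c)
      have hmem := h (f (a, b, c)) (Finset.mem_image_of_mem _ (Finset.mem_univ _))
      have hq30 := hf2 (a, b, c)
      have hno := hf3 (a, b, c) ht
      generalize f (a, b, c) = q at hq1 hmem hq30 hno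
      have hfact : Fact q.Prime := ⟨hq1⟩
      obtain ⟨z, hz⟩ := hmem hfact
      have hnz : ∀ r : ℕ, r ∣ 30 → (r : ZMod q) ≠ 0 := by
        intro r hr h0
        rw [ZMod.natCast_eq_zero_iff] at h0
        exact hq30 (h0.trans hr)
      have h2 : (2 : ZMod q) ≠ 0 := by exact_mod_cast hnz 2 (by norm_num)
      have h3 : (3 : ZMod q) ≠ 0 := by exact_mod_cast hnz 3 (by norm_num)
      have h5 : (5 : ZMod q) ≠ 0 := by exact_mod_cast hnz 5 (by norm_num)
      have hsplit : ∀ (u : ZMod q) (hu : u ≠ 0) (i : ℤ) (a : Fin p), i = (a.val : ℤ) + p * (i / p) →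
          u ^ i = u ^ a.val * (u ^ (i / p)) ^ p := by
        intro u hu i a h
        conv_lhs => rw [h]
        rw [zpow_add₀ hu, zpow_natCast, mul_comm (p : ℤ), zpow_mul, zpow_natCast]
      rw [hsplit 2 h2 i a ha, hsplit 3 h3 j b hb, hsplit 5 h5 l c hc] at hz
      apply hno (z / ((2 : ZMod q) ^ (i / p) * 3 ^ (j / p) * 5 ^ (l / p)))
      rw [div_pow, hz]
      have e2 := zpow_ne_zero (i / p) h2
      have e3 := zpow_ne_zero (j / p) h3
      have e5 := zpow_ne_zero (l / p) h5
      push_cast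
      generalize (2 : ZMod q) ^ (i / (p : ℤ)) = A at *
      generalize (3 : ZMod q) ^ (j / (p : ℤ)) = B at *
      generalize (5 : ZMod q) ^ (l / (p : ℤ)) = D at *
      field_simp
      rw [mul_pow, mul_pow]
end CQ

namespace CQ

noncomputable def pol (k : ℕ) : ℚ[X] := X ^ 4 + C (2 * (k : ℚ)) * X ^ 3 - C 6 * X ^ 2 - C (2 * (k : ℚ)) * X + 1

def Rt {L : Type*} [Field L] (k : ℕ) (x : L) : Prop :=
  x ^ 4 + 2 * (k : L) * x ^ 3 - 6 * x ^ 2 - 2 * (k : L) * x + 1 = 0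

lemma aeval_pol {L : Type*} [Field L] [Algebra ℚ L] (k : ℕ) (x : L) :
    aeval x (pol k) = x ^ 4 + 2 * (k : L) * x ^ 3 - 6 * x ^ 2 - 2 * (k : L) * x + 1 := by
  simp [pol]

lemma pol_natDegree (k : ℕ) : (pol k).natDegree = 4 := by
  unfold pol; compute_degree!

lemma pol_monic (k : ℕ) : (pol k).Monic := by
  unfold pol; monicity!

section
variable {L : Type*} [Field L] [CharZero L] {k : ℕ} {x : L}
lemma Rt.ne_zero (hx : Rt k x) : x ≠ 0 := by rintro rfl; simp [Rt] at hx
lemma Rt.add_one (hx : Rt k x) : x + 1 ≠ 0 := by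
  intro h
  have : x = -1 := by linear_combination h
  subst this
  have h4 : (4 : L) = 0 := by unfold Rt at hx; linear_combination -hx
  norm_num at h4
lemma Rt.sub_one (hx : Rt k x) : x - 1 ≠ 0 := by
  intro h
  have : x = 1 := by linear_combination h
  subst this
  have h4 : (4 : L) = 0 := by unfold Rt at hx; linear_combination -hx
  norm_num at h4
lemma Rt.one_sub (hx : Rt k x) : 1 - x ≠ 0 := by
  intro h
  exact hx.sub_one (by linear_combination -h)
lemma Rt.roots (hx : Rt k x) {z : L} (hz : Rt k z) : z = x ∨ z = (x - 1) / (x + 1) ∨ z = -1 / x ∨ z = (1 + x) / (1 - x) := by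
  have h : (z - x) * ((x + 1) * z - (x - 1)) * (x * z + 1) * ((1 - x) * z - (1 + x)) = 0 := by
    unfold Rt at hx hz
    linear_combination (z ^ 3 - z) * hx - (x ^ 3 - x) * hz
  have h0 := hx.ne_zero
  have h1 := hx.add_one
  have h2 := hx.one_sub
  rcases mul_eq_zero.1 h with h | h
  · rcases mul_eq_zero.1 h with h | h
    · rcases mul_eq_zero.1 h with h | h
      · left; linear_combination h
      · right; left; rw [eq_div_iff h1]; linear_combination h
    · right; right; left; rw [eq_div_iff h0]; linear_combination h
  · right; right; right; rw [eq_div_iff h2]; linear_combination h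
end

lemma Rt.map {L L' : Type*} [Field L] [Field L'] {k : ℕ} {z : L} (hz : Rt k z) (f : L →+* L') :
    Rt k (f z) := by
  unfold Rt at *
  have := congrArg f hz
  simp only [map_add, map_sub, map_mul, map_pow, map_one, map_zero, map_natCast, map_ofNat] at this
  exact this

lemma exists_real_root (k : ℕ) : ∃ x : ℝ, Rt k x := by
  obtain ⟨d, hd⟩ : ∃ d : ℝ, d ^ 2 = (k : ℝ) ^ 2 + 4 := ⟨√((k : ℝ) ^ 2 + 4), Real.sq_sqrt (by positivity)⟩
  obtain ⟨e, he⟩ : ∃ e : ℝ, e ^ 2 = (d - k) ^ 2 + 4 := ⟨√((d - k) ^ 2 + 4), Real.sq_sqrt (by positivity)⟩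
  refine ⟨((d - k) + e) / 2, ?_⟩
  set x := ((d - k) + e) / 2 with hx
  have h1 : x ^ 2 = (d - k) * x + 1 := by
    rw [hx]; linear_combination (1/4) * he
  unfold Rt
  have h2 : x ^ 2 - 1 = (d - k) * x := by linear_combination h1
  have : x ^ 4 + 2 * (k : ℝ) * x ^ 3 - 6 * x ^ 2 - 2 * (k : ℝ) * x + 1 = (x ^ 2 - 1) ^ 2 + 2 * k * x * (x ^ 2 - 1) - 4 * x ^ 2 := by ring
  rw [this, h2]
  linear_combination x ^ 2 * hd

lemma not_sq (k : ℕ) (hk : 0 < k) (q : ℚ) : q ^ 2 ≠ (k : ℚ) ^ 2 + 4 := by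
  intro h
  have h1 : IsSquare (((k ^ 2 + 4 : ℕ)) : ℚ) := ⟨q, by push_cast; linear_combination -h⟩
  rw [Rat.isSquare_natCast_iff] at h1
  obtain ⟨r, hr⟩ := h1
  rcases lt_trichotomy r (k + 1) with h | h | h
  · have : r ≤ k := by omega
    nlinarith
  · subst h
    have : 2 * k = 3 := by nlinarith
    omega
  · have : k + 2 ≤ r := by omega
    nlinarith

theorem field_exists (k : ℕ) (hk : 0 < k) : ∃ K : IntermediateField ℚ ℂ, NumberField K ∧
    Irreducible (pol k) ∧ (pol k).IsSplittingField ℚ K ∧ Module.finrank ℚ K = 4 ∧ IsGalois ℚ K ∧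
    Nonempty ((K ≃ₐ[ℚ] K) ≃* Multiplicative (ZMod 4)) ∧ TotallyReal K ∧
    ∃ (x : K) (σ : K ≃ₐ[ℚ] K), Rt k x ∧ σ x * (x + 1) = x - 1 ∧ (∀ g, g ∈ Subgroup.zpowers σ) ∧
      ∀ (L : Type) [Field L] [Algebra ℚ L] (z : L), Rt k z → ∃ f : K →ₐ[ℚ] L, f x = z := by
  obtain ⟨r, hr⟩ := exists_real_root k
  have hreal : ∀ z : ℂ, Rt k z → z.im = 0 := by
    have hrc : Rt k (r : ℂ) := by unfold Rt at hr ⊢; exact_mod_cast hr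
    intro z hz
    rcases hrc.roots hz with h | h | h | h
    · rw [h]; simp
    · have : z = (((r - 1) / (r + 1) : ℝ) : ℂ) := by rw [h]; push_cast; rfl
      rw [this]; exact Complex.ofReal_im _
    · have : z = ((-1 / r : ℝ) : ℂ) := by rw [h]; push_cast; rfl
      rw [this]; exact Complex.ofReal_im _
    · have : z = (((1 + r) / (1 - r) : ℝ) : ℂ) := by rw [h]; push_cast; rfl
      rw [this]; exact Complex.ofReal_im _
  have hrc : Rt k (r : ℂ) := by unfold Rt at hr ⊢; exact_mod_cast hr
  have hrint : IsIntegral ℚ (r : ℂ) := by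
    refine ⟨pol k, pol_monic k, ?_⟩
    rw [← aeval_def, aeval_pol]; exact hrc
  let K : IntermediateField ℚ ℂ := IntermediateField.adjoin ℚ {(r : ℂ)}
  have hfd : FiniteDimensional ℚ K := IntermediateField.adjoin.finiteDimensional hrint
  have hnf : NumberField K := ⟨⟩
  let pb : PowerBasis ℚ K := IntermediateField.adjoin.powerBasis hrint
  let x : K := IntermediateField.AdjoinSimple.gen ℚ (r : ℂ)
  have hgen : pb.gen = x := IntermediateField.adjoin.powerBasis_gen hrint
  have hxr : (x : ℂ) = r := IntermediateField.AdjoinSimple.coe_gen ℚ _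
  have hRt : ∀ {L L' : Type} [Field L] [Field L'] (f : L →+* L') (z : L), Rt k z → Rt k (f z) := by
    intro L L' _ _ f z hz
    exact hz.map f
  have hx : Rt k x := by
    unfold Rt at *
    apply Subtype.ext
    push_cast
    rw [hxr]
    exact hrc
  -- extensionality
  have hext : ∀ {A : Type} [Field A] [Algebra ℚ A] (f g : K →ₐ[ℚ] A), f x = g x → f = g := by
    intro A _ _ f g h
    apply pb.algHom_ext
    rw [hgen]; exact h
  -- sigma existence
  have hlift : ∀ z : K, (∃ τ : K →ₐ[ℚ] ℂ, τ x = z) → ∃ f : K →ₐ[ℚ] K, f x = z := by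
    rintro z ⟨τ, hτ⟩
    have hz0 : aeval z (minpoly ℚ pb.gen) = 0 := by
      apply (algebraMap K ℂ).injective
      rw [← aeval_algebraMap_apply, map_zero]
      change aeval (z : ℂ) _ = 0
      rw [← hτ, hgen, aeval_algHom_apply, minpoly.aeval, map_zero]
    refine ⟨pb.lift z hz0, ?_⟩
    rw [← hgen, pb.lift_gen]
  have hδ : ∃ f : K →ₐ[ℚ] K, f x = (x - 1) / (x + 1) ∨ f x = (1 + x) / (1 - x) := by
    let δ : K := x - 1 / x + k
    have hx0 := hx.ne_zero
    have hδ2 : δ ^ 2 = (k : K) ^ 2 + 4 := by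
      simp only [δ]
      field_simp
      unfold Rt at hx
      linear_combination hx
    have hmin : minpoly ℚ δ = X ^ 2 - C ((k : ℚ) ^ 2 + 4) := by
      symm
      apply minpoly.eq_of_irreducible_of_monic
      · exact X_pow_sub_C_irreducible_of_prime Nat.prime_two (fun b => not_sq k hk b)
      · simp [hδ2]
      · exact monic_X_pow_sub_C _ two_ne_zero
    have hrange := Algebra.IsAlgebraic.range_eval_eq_rootSet_minpoly (F := ℚ) (K := K) ℂ δ
    have hmem : -(δ : ℂ) ∈ (minpoly ℚ δ).rootSet ℂ := by
      rw [hmin, mem_rootSet]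
      refine ⟨(monic_X_pow_sub_C _ two_ne_zero).ne_zero, ?_⟩
      have : (δ : ℂ) ^ 2 = (k : ℂ) ^ 2 + 4 := by
        have := congrArg (algebraMap K ℂ) hδ2
        simp only [map_pow, map_add, map_natCast, map_ofNat] at this
        exact this
      simp [this]
    rw [← hrange] at hmem
    obtain ⟨τ, hτ⟩ := hmem
    simp only at hτ
    have hτx : Rt k (τ x) := hRt τ.toRingHom x hx
    have hxc : Rt k (x : ℂ) := hRt (algebraMap K ℂ) x hx
    have hδ0 : (δ : ℂ) ≠ 0 := by
      intro h
      have h0 : δ = 0 := by exact_mod_cast h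
      rw [h0] at hδ2
      have : (k : K) ^ 2 + 4 ≠ 0 := by
        have : ((k ^ 2 + 4 : ℕ) : K) ≠ 0 := by
          rw [Nat.cast_ne_zero]; positivity
        push_cast at this; exact this
      apply this; rw [← hδ2]; ring
    have hτδ : τ x - 1 / τ x + k = -(δ : ℂ) := by
      rw [← hτ]; simp [δ]
    have hδc : (δ : ℂ) = (x : ℂ) - 1 / (x : ℂ) + k := by simp [δ]
    rcases hxc.roots hτx with h | h | h | h
    · exfalso
      rw [h, ← hδc] at hτδ
      apply hδ0
      linear_combination (1/2) * hτδ
    · obtain ⟨f, hf⟩ := hlift ((x - 1) / (x + 1)) ⟨τ, by rw [h]; push_cast; rfl⟩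
      exact ⟨f, Or.inl hf⟩
    · exfalso
      have hxc0 := hxc.ne_zero
      have : τ x - 1 / τ x + k = (δ : ℂ) := by
        rw [h, hδc]; field_simp; ring
      rw [this] at hτδ
      apply hδ0
      linear_combination (1/2) * hτδ
    · obtain ⟨f, hf⟩ := hlift ((1 + x) / (1 - x)) ⟨τ, by rw [h]; push_cast; rfl⟩
      exact ⟨f, Or.inr hf⟩
  have hx0 := hx.ne_zero
  have hx1 := hx.add_one
  have hx2 := hx.one_sub
  have hx3 := hx.sub_one
  have h2K : (2 : K) ≠ 0 := two_ne_zero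
  have hsig : ∃ f : K →ₐ[ℚ] K, f x = (x - 1) / (x + 1) := by
    obtain ⟨f, hf | hf⟩ := hδ
    · exact ⟨f, hf⟩
    · refine ⟨(f.comp f).comp f, ?_⟩
      have e1 : f (f x) = -1 / x := by
        have : (1 - (1 + x) / (1 - x)) ≠ 0 := by
          have : (1 - (1 + x) / (1 - x)) = -2 * x / (1 - x) := by field_simp; ring
          rw [this]
          exact div_ne_zero (mul_ne_zero (neg_ne_zero.2 h2K) hx0) hx2
        rw [hf, map_div₀, map_add, map_sub, map_one, hf, div_eq_div_iff this hx0]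
        field_simp
        ring
      simp only [AlgHom.comp_apply]
      have hx1' : 1 + x ≠ 0 := by rw [add_comm]; exact hx1
      rw [e1, map_div₀, map_neg, map_one, hf]
      field_simp
      ring
  obtain ⟨f, hf⟩ := hsig
  have e2 : f (f x) = -1 / x := by
    have : ((x - 1) / (x + 1) + 1) ≠ 0 := by
      have : ((x - 1) / (x + 1) + 1) = 2 * x / (x + 1) := by field_simp; ring
      rw [this]
      exact div_ne_zero (mul_ne_zero h2K hx0) hx1
    rw [hf, map_div₀, map_add, map_sub, map_one, hf, div_eq_div_iff this hx0]
    field_simp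
    ring
  have e4 : f (f (f (f x))) = x := by
    rw [e2, map_div₀, map_neg, map_one, map_div₀, map_neg, map_one, e2]
    field_simp
  have hbij : Function.Bijective f := by
    exact Algebra.IsAlgebraic.algHom_bijective f
  let σ : K ≃ₐ[ℚ] K := AlgEquiv.ofBijective f hbij
  have hσf : ∀ z, σ z = f z := fun z => rfl
  have hσ4 : σ ^ 4 = 1 := by
    have : (σ ^ 4 : K ≃ₐ[ℚ] K).toAlgHom = (1 : K ≃ₐ[ℚ] K).toAlgHom := by
      apply hext
      change σ (σ (σ (σ x))) = x
      simp only [hσf]; exact e4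
    ext z
    have := congrArg (fun g : K →ₐ[ℚ] K => (g z : ℂ)) this
    exact this
  have hσ2 : σ ^ 2 ≠ 1 := by
    intro h
    have h1 : (σ ^ 2) x = x := by rw [h]; rfl
    have h2 : (σ ^ 2) x = -1 / x := e2
    rw [h2] at h1
    have h3 : x ^ 2 = -1 := by
      have := (div_eq_iff hx0).1 h1
      linear_combination -this
    have h4 := congrArg (algebraMap K ℂ) h3
    rw [map_pow, map_neg, map_one] at h4
    change (x : ℂ) ^ 2 = -1 at h4
    rw [hxr] at h4
    have h5 : r ^ 2 = -1 := by exact_mod_cast h4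
    nlinarith [sq_nonneg r]
  have hord : orderOf σ = 2 ^ 2 := orderOf_eq_prime_pow (p := 2) (n := 1) (by simpa using hσ2) (by simpa using hσ4)
  have hdvd : minpoly ℚ x ∣ pol k := by
    apply minpoly.dvd
    rw [aeval_pol]; exact hx
  have hfr : Module.finrank ℚ K = (minpoly ℚ x).natDegree := by
    rw [← hgen, ← pb.finrank.symm, ← pb.natDegree_minpoly]
  have hle : Module.finrank ℚ K ≤ 4 := by
    rw [hfr, ← pol_natDegree k]
    exact natDegree_le_of_dvd hdvd (pol_monic k).ne_zero
  have hcle : Nat.card (K ≃ₐ[ℚ] K) ≤ Module.finrank ℚ K := by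
    rw [Nat.card_eq_fintype_card]; exact AlgEquiv.card_le
  have hge : 4 ≤ Nat.card (K ≃ₐ[ℚ] K) := by
    have := orderOf_le_card (x := σ)
    omega
  have hcard : Nat.card (K ≃ₐ[ℚ] K) = 4 := by omega
  have hfin4 : Module.finrank ℚ K = 4 := by omega
  have hgal : IsGalois ℚ K := IsGalois.of_card_aut_eq_finrank ℚ K (by omega)
  have hpm : pol k = minpoly ℚ x := by
    refine (eq_of_monic_of_dvd_of_natDegree_le (minpoly.monic (IsIntegral.of_finite ℚ x)) (pol_monic k) hdvd ?_)
    rw [← hfr, hfin4, pol_natDegree]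
  have hcyc : IsCyclic (K ≃ₐ[ℚ] K) := isCyclic_of_orderOf_eq_card σ (by rw [hord, hcard]; norm_num)
  refine ⟨K, hnf, ?_, ⟨?_, ?_⟩, hfin4, hgal, ?_, ?_, x, σ, hx, ?_, ?_, ?_⟩
  · rw [hpm]; exact minpoly.irreducible (IsIntegral.of_finite ℚ x)
  · rw [hpm]; exact Normal.splits inferInstance x
  · rw [eq_top_iff, ← pb.adjoin_gen_eq_top, hgen]
    apply Algebra.adjoin_mono
    rw [Set.singleton_subset_iff, mem_rootSet]
    exact ⟨(pol_monic k).ne_zero, by rw [aeval_pol]; exact hx⟩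
  · exact ⟨mulEquivOfCyclicCardEq (by rw [hcard]; simp)⟩
  · intro φ z
    have hφx : (φ x).im = 0 := hreal _ (hRt φ x hx)
    let φ' : K →ₐ[ℚ] ℂ := φ.toRatAlgHom
    have hconj : φ' = (Complex.conjAe.toAlgHom.restrictScalars ℚ).comp φ' := by
      apply hext
      change φ x = starRingEnd ℂ (φ x)
      exact (Complex.conj_eq_iff_im.2 hφx).symm
    have h2 : φ z = starRingEnd ℂ (φ z) := congrArg (fun g : K →ₐ[ℚ] ℂ => g z) hconj
    exact Complex.conj_eq_iff_im.1 h2.symm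
  · rw [hσf, hf, div_mul_cancel₀ _ hx1]
  · intro g
    have htop : Subgroup.zpowers σ = ⊤ := by
      apply Subgroup.eq_top_of_card_eq
      rw [Nat.card_zpowers, hord, hcard]; norm_num
    rw [htop]; trivial
  · intro L _ _ z hz
    have h0 : aeval z (minpoly ℚ pb.gen) = 0 := by
      rw [hgen, ← hpm, aeval_pol]; exact hz
    refine ⟨pb.lift z h0, ?_⟩
    rw [← hgen, pb.lift_gen]
end CQ

namespace CQ

/-- The Moebius map of order four. -/
def mob {L : Type*} [Field L] (x : L) : L := (x - 1) / (x + 1)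

section local_part
variable (q p : ℕ) [hq : Fact q.Prime]

/-- `g` is a `p`-th power times a unit with prescribed residue. -/
def RR (g : ℚ_[q]) (i j l : ℤ) : Prop :=
  ∃ (v : ℚ_[q]) (u : ℤ_[q]), v ≠ 0 ∧ g = v ^ p * (u : ℚ_[q]) ∧
    PadicInt.toZMod u = (2 : ZMod q) ^ i * (3 : ZMod q) ^ j * (5 : ZMod q) ^ l

variable {q p}

lemma zmod_ne (h30 : ¬ q ∣ 30) (r : ℕ) (hr : r ∣ 30) : (r : ZMod q) ≠ 0 := by
  intro h0
  rw [ZMod.natCast_eq_zero_iff] at h0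
  exact h30 (h0.trans hr)

lemma zmod2 (h30 : ¬ q ∣ 30) : (2 : ZMod q) ≠ 0 := by exact_mod_cast zmod_ne h30 2 (by norm_num)
lemma zmod3 (h30 : ¬ q ∣ 30) : (3 : ZMod q) ≠ 0 := by exact_mod_cast zmod_ne h30 3 (by norm_num)
lemma zmod5 (h30 : ¬ q ∣ 30) : (5 : ZMod q) ≠ 0 := by exact_mod_cast zmod_ne h30 5 (by norm_num)

lemma isUnit_of_toZMod {u : ℤ_[q]} (h : PadicInt.toZMod u ≠ 0) : IsUnit u := by
  by_contra hu
  apply h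
  have : u ∈ RingHom.ker (PadicInt.toZMod (p := q)) := by
    rw [PadicInt.ker_toZMod]; exact hu
  exact this

lemma RR.mul (h30 : ¬ q ∣ 30) {g g' : ℚ_[q]} {i j l i' j' l' : ℤ} (h : RR q p g i j l)
    (h' : RR q p g' i' j' l') : RR q p (g * g') (i + i') (j + j') (l + l') := by
  obtain ⟨v, u, hv, hg, hu⟩ := h
  obtain ⟨v', u', hv', hg', hu'⟩ := h'
  refine ⟨v * v', u * u', mul_ne_zero hv hv', ?_, ?_⟩
  · rw [hg, hg']; push_cast; ring
  · rw [map_mul, hu, hu', zpow_add₀ (zmod2 h30), zpow_add₀ (zmod3 h30), zpow_add₀ (zmod5 h30)]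
    ring

lemma RR.ne (h30 : ¬ q ∣ 30) {u : ℤ_[q]} {i j l : ℤ}
    (hu : PadicInt.toZMod u = (2 : ZMod q) ^ i * (3 : ZMod q) ^ j * (5 : ZMod q) ^ l) : IsUnit u := by
  apply isUnit_of_toZMod
  rw [hu]
  exact mul_ne_zero (mul_ne_zero (zpow_ne_zero _ (zmod2 h30)) (zpow_ne_zero _ (zmod3 h30)))
    (zpow_ne_zero _ (zmod5 h30))

lemma RR.inv (h30 : ¬ q ∣ 30) {g : ℚ_[q]} {i j l : ℤ} (h : RR q p g i j l) :
    RR q p g⁻¹ (-i) (-j) (-l) := by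
  obtain ⟨v, u, hv, hg, hu⟩ := h
  obtain ⟨w, hw⟩ := (RR.ne h30 hu).exists_right_inv
  refine ⟨v⁻¹, w, inv_ne_zero hv, ?_, ?_⟩
  · rw [hg, mul_inv, inv_pow]
    congr 1
    have : (u : ℚ_[q]) * (w : ℚ_[q]) = 1 := by
      rw [← PadicInt.coe_mul, hw, PadicInt.coe_one]
    exact inv_eq_of_mul_eq_one_right this
  · have h1 := congrArg PadicInt.toZMod hw
    rw [map_mul, map_one, hu] at h1
    rw [eq_inv_of_mul_eq_one_right h1, mul_inv, mul_inv, zpow_neg, zpow_neg, zpow_neg]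

lemma RR.one : RR q p 1 0 0 0 := ⟨1, 1, one_ne_zero, by simp, by simp⟩

lemma RR.pow (h30 : ¬ q ∣ 30) {g : ℚ_[q]} {i j l : ℤ} (h : RR q p g i j l) (e : ℕ) :
    RR q p (g ^ e) (e * i) (e * j) (e * l) := by
  induction e with
  | zero => simpa using RR.one
  | succ e ih =>
    have := ih.mul h30 h
    rw [pow_succ]
    push_cast
    convert this using 1 <;> ring

lemma RR.zpow (h30 : ¬ q ∣ 30) {g : ℚ_[q]} {i j l : ℤ} (h : RR q p g i j l) (e : ℤ) :
    RR q p (g ^ e) (e * i) (e * j) (e * l) := by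
  obtain ⟨m, rfl | rfl⟩ := e.eq_nat_or_neg
  · simpa using h.pow h30 m
  · have := (h.pow h30 m).inv h30
    simpa using this

lemma RR.div (h30 : ¬ q ∣ 30) {g g' : ℚ_[q]} {i j l i' j' l' : ℤ} (h : RR q p g i j l)
    (h' : RR q p g' i' j' l') : RR q p (g / g') (i - i') (j - j') (l - l') := by
  rw [div_eq_mul_inv, sub_eq_add_neg, sub_eq_add_neg, sub_eq_add_neg]
  exact h.mul h30 (h'.inv h30)

lemma RR.neg (hp : Odd p) {g : ℚ_[q]} {i j l : ℤ} (h : RR q p g i j l) : RR q p (-g) i j l := by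
  obtain ⟨v, u, hv, hg, hu⟩ := h
  exact ⟨-v, u, neg_ne_zero.2 hv, by rw [hg, hp.neg_pow]; ring, hu⟩

lemma RR.of_int (u : ℤ_[q]) (i j l : ℤ)
    (hu : PadicInt.toZMod u = (2 : ZMod q) ^ i * (3 : ZMod q) ^ j * (5 : ZMod q) ^ l) :
    RR q p (u : ℚ_[q]) i j l := ⟨1, u, one_ne_zero, by simp, hu⟩

lemma RR.final (h30 : ¬ q ∣ 30) (hp : p ≠ 0) {b : ℚ_[q]} {i j l : ℤ} (h : RR q p (b ^ p) i j l) :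
    ∃ z : ZMod q, z ^ p = (2 : ZMod q) ^ i * (3 : ZMod q) ^ j * (5 : ZMod q) ^ l := by
  obtain ⟨v, u, hv, hg, hu⟩ := h
  have hu1 : ‖u‖ = 1 := PadicInt.isUnit_iff.1 (RR.ne h30 hu)
  have h1 : (b / v) ^ p = (u : ℚ_[q]) := by
    rw [div_pow, hg]; field_simp
  have h2 : ‖b / v‖ ≤ 1 := by
    have := congrArg norm h1
    rw [norm_pow, PadicInt.padic_norm_e_of_padicInt, hu1] at this
    exact ((pow_eq_one_iff_of_nonneg (norm_nonneg _) hp).1 this).le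
  let w : ℤ_[q] := ⟨b / v, h2⟩
  have h3 : w ^ p = u := by
    apply Subtype.ext
    rw [PadicInt.coe_pow]; exact h1
  exact ⟨PadicInt.toZMod w, by rw [← map_pow, h3, hu]⟩

lemma hensel_root (h30 : ¬ q ∣ 30) (k y n : ℕ) (hn : n ≠ 0) (hy : q ∣ y) (hk : y ^ n + 7 = 12 * k) :
    ∃ z : ℤ_[q], PadicInt.toZMod z = 2 ∧ Rt k (z : ℚ_[q]) := by
  let F : ℤ_[q][X] := X ^ 4 + C (2 * (k : ℤ_[q])) * X ^ 3 - C 6 * X ^ 2 - C (2 * (k : ℤ_[q])) * X + 1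
  have hkq : (12 : ℤ_[q]) * k = (y : ℤ_[q]) ^ n + 7 := by exact_mod_cast hk.symm
  have hyz : PadicInt.toZMod ((y : ℤ_[q])) = 0 := by
    rw [map_natCast, ZMod.natCast_eq_zero_iff]; exact hy
  have hF : aeval (2 : ℤ_[q]) F = (y : ℤ_[q]) ^ n := by
    simp [F]; linear_combination hkq
  have hF' : aeval (2 : ℤ_[q]) (derivative F) = 22 * k + 8 := by
    simp [F]; ring
  have hu : IsUnit (aeval (2 : ℤ_[q]) (derivative F)) := by
    apply isUnit_of_toZMod
    intro h
    rw [hF'] at h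
    have h1 : PadicInt.toZMod (6 * (22 * (k : ℤ_[q]) + 8)) = 125 := by
      have : 6 * (22 * (k : ℤ_[q]) + 8) = 11 * (y : ℤ_[q]) ^ n + 125 := by linear_combination 11 * hkq
      rw [this, map_add, map_mul, map_pow, hyz, zero_pow hn, mul_zero, zero_add, map_ofNat]
    rw [map_mul, h, mul_zero] at h1
    have : (5 : ZMod q) ^ 3 = 0 := by rw [show (5 : ZMod q) ^ 3 = 125 by norm_num, ← h1]
    exact zmod5 h30 (pow_eq_zero_iff (by norm_num) |>.1 this)
  have hn1 : ‖aeval (2 : ℤ_[q]) (derivative F)‖ = 1 := PadicInt.isUnit_iff.1 hu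
  have hn2 : ‖aeval (2 : ℤ_[q]) F‖ < 1 := by
    rw [← PadicInt.mem_nonunits, hF, ← IsLocalRing.mem_maximalIdeal, ← PadicInt.ker_toZMod, RingHom.mem_ker,
      map_pow, hyz, zero_pow hn]
  obtain ⟨z, hz1, hz2, -⟩ := hensels_lemma (F := F) (a := (2 : ℤ_[q])) (by rw [hn1]; simpa using hn2)
  refine ⟨z, ?_, ?_⟩
  · rw [hn1, ← PadicInt.mem_nonunits, ← IsLocalRing.mem_maximalIdeal, ← PadicInt.ker_toZMod, RingHom.mem_ker,
      map_sub, map_ofNat] at hz2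
    exact sub_eq_zero.1 hz2
  · have : z ^ 4 + 2 * (k : ℤ_[q]) * z ^ 3 - 6 * z ^ 2 - 2 * (k : ℤ_[q]) * z + 1 = 0 := by
      simpa [F] using hz1
    unfold Rt
    exact_mod_cast congrArg (fun t : ℤ_[q] => (t : ℚ_[q])) this

/-- The combined expression whose p-th power status is tested. -/
def GG {L : Type*} [Field L] (e0 e1 e2 a b c : ℤ) (x : L) : L :=
  (x - 2) ^ e0 * (mob x - 2) ^ e1 * (mob (mob x) - 2) ^ e2 * x ^ a * (mob x) ^ b *
    ((x - 1) ^ 2 / 2) ^ c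

lemma map_mob {L L' : Type*} [Field L] [Field L'] (f : L →+* L') (x : L) : f (mob x) = mob (f x) := by
  simp [mob]

lemma map_GG {L L' : Type*} [Field L] [Field L'] (f : L →+* L') (e0 e1 e2 a b c : ℤ) (x : L) :
    f (GG e0 e1 e2 a b c x) = GG e0 e1 e2 a b c (f x) := by
  simp only [GG, map_mul, map_zpow₀, map_sub, map_div₀, map_pow, map_one, map_ofNat, map_mob]

lemma RR.GG (h30 : ¬ q ∣ 30) {X : ℚ_[q]} {i0 j0 l0 i1 j1 l1 i2 j2 l2 i3 j3 l3 i4 j4 l4 i5 j5 l5 : ℤ}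
    (h0 : RR q p (X - 2) i0 j0 l0) (h1 : RR q p (mob X - 2) i1 j1 l1)
    (h2 : RR q p (mob (mob X) - 2) i2 j2 l2) (h3 : RR q p X i3 j3 l3) (h4 : RR q p (mob X) i4 j4 l4)
    (h5 : RR q p ((X - 1) ^ 2 / 2) i5 j5 l5) (e0 e1 e2 a b c : ℤ) :
    RR q p (GG e0 e1 e2 a b c X)
      (e0 * i0 + e1 * i1 + e2 * i2 + a * i3 + b * i4 + c * i5)
      (e0 * j0 + e1 * j1 + e2 * j2 + a * j3 + b * j4 + c * j5)
      (e0 * l0 + e1 * l1 + e2 * l2 + a * l3 + b * l4 + c * l5) :=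
  (((((h0.zpow h30 e0).mul h30 (h1.zpow h30 e1)).mul h30 (h2.zpow h30 e2)).mul h30
    (h3.zpow h30 a)).mul h30 (h4.zpow h30 b)).mul h30 (h5.zpow h30 c)

lemma mob2 {L : Type*} [Field L] [CharZero L] {k : ℕ} {x : L} (hx : Rt k x) : mob (mob x) = -1 / x := by
  have hx0 := hx.ne_zero
  have hx1 := hx.add_one
  have h2 : (2 : L) ≠ 0 := two_ne_zero
  have : ((x - 1) / (x + 1) + 1) ≠ 0 := by
    have : ((x - 1) / (x + 1) + 1) = 2 * x / (x + 1) := by field_simp; ring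
    rw [this]
    exact div_ne_zero (mul_ne_zero h2 hx0) hx1
  unfold mob
  rw [div_eq_div_iff this hx0]
  field_simp
  ring

lemma Rt.mob {L : Type*} [Field L] [CharZero L] {k : ℕ} {x : L} (hx : Rt k x) : Rt k (mob x) := by
  have hx1 := hx.add_one
  unfold Rt at *
  unfold CQ.mob
  field_simp
  linear_combination -4 * hx

lemma local_facts (h30 : ¬ q ∣ 30) (hp : Odd p) (k y n : ℕ) (hpn : p ∣ n)
    (hk : y ^ n + 7 = 12 * k) (hy0 : y ≠ 0) (z : ℤ_[q]) (hz : PadicInt.toZMod z = 2)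
    (X : ℚ_[q]) (hX : X = z) (hR : Rt k X) (e0 e1 e2 a b c : ℤ) :
    RR q p (GG e0 e1 e2 a b c X) (e0 * 1 + e1 * 0 + e2 * (-1) + a * 1 + b * 0 + c * (-1))
      (e0 * 1 + e1 * (-1) + e2 * 0 + a * 0 + b * (-1) + c * 0)
      (e0 * (-3) + e1 * 1 + e2 * 1 + a * 0 + b * 0 + c * 0) ∧
    RR q p (GG e0 e1 e2 a b c (mob X)) (e0 * 0 + e1 * (-1) + e2 * 0 + a * 0 + b * (-1) + c * 1)
      (e0 * (-1) + e1 * 0 + e2 * 0 + a * (-1) + b * 0 + c * (-2))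
      (e0 * 1 + e1 * 1 + e2 * 1 + a * 0 + b * 0 + c * 0) ∧
    RR q p (GG e0 e1 e2 a b c (mob (mob X)))
      (e0 * (-1) + e1 * 0 + e2 * 1 + a * (-1) + b * 0 + c * (-3))
      (e0 * 0 + e1 * 0 + e2 * 1 + a * 0 + b * 1 + c * 2)
      (e0 * 1 + e1 * 1 + e2 * (-3) + a * 0 + b * 0 + c * 0) ∧
    RR q p (GG e0 e1 e2 a b c (mob (mob (mob X))))
      (e0 * 0 + e1 * 1 + e2 * 0 + a * 0 + b * 1 + c * 3)
      (e0 * 0 + e1 * 1 + e2 * (-1) + a * 1 + b * 0 + c * 0)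
      (e0 * 1 + e1 * (-3) + e2 * 1 + a * 0 + b * 0 + c * 0) := by
  have hX0 := hR.ne_zero
  have hXp := hR.add_one
  have hXm := hR.sub_one
  have hXm' := hR.one_sub
  have hm1 : mob X = (X - 1) / (X + 1) := rfl
  have hm2 : mob (mob X) = -1 / X := mob2 hR
  have hm3 : mob (mob (mob X)) = -((X + 1) / (X - 1)) := by
    rw [mob2 hR.mob, hm1]
    field_simp
  have hm4 : mob (mob (mob (mob X))) = X := by
    rw [mob2 hR.mob.mob, hm2]
    field_simp
  -- basic residues
  have b0 : RR q p X 1 0 0 := by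
    rw [hX]; apply RR.of_int; rw [hz]; simp
  have bm : RR q p (X - 1) 0 0 0 := by
    have : X - 1 = ((z - 1 : ℤ_[q]) : ℚ_[q]) := by rw [hX]; push_cast; rfl
    rw [this]; apply RR.of_int; rw [map_sub, map_one, hz]; norm_num
  have bp : RR q p (X + 1) 0 1 0 := by
    have : X + 1 = ((z + 1 : ℤ_[q]) : ℚ_[q]) := by rw [hX]; push_cast; rfl
    rw [this]; apply RR.of_int; rw [map_add, map_one, hz]; norm_num
  have bt : RR q p (2 : ℚ_[q]) 1 0 0 := by
    have : (2 : ℚ_[q]) = ((2 : ℤ_[q]) : ℚ_[q]) := by norm_cast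
    rw [this]; apply RR.of_int; rw [map_ofNat]; simp
  have b3 : RR q p (X + 3) 0 0 1 := by
    have : X + 3 = ((z + 3 : ℤ_[q]) : ℚ_[q]) := by rw [hX]; push_cast; norm_cast
    rw [this]; apply RR.of_int; rw [map_add, map_ofNat, hz]; norm_num
  have b4 : RR q p (2 * X + 1) 0 0 1 := by
    have : 2 * X + 1 = ((2 * z + 1 : ℤ_[q]) : ℚ_[q]) := by rw [hX]; push_cast; norm_cast
    rw [this]; apply RR.of_int; rw [map_add, map_mul, map_ofNat, map_one, hz]; norm_num
  have b5 : RR q p (3 * X - 1) 0 0 1 := by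
    have : 3 * X - 1 = ((3 * z - 1 : ℤ_[q]) : ℚ_[q]) := by rw [hX]; push_cast; norm_cast
    rw [this]; apply RR.of_int; rw [map_sub, map_mul, map_ofNat, map_one, hz]; norm_num
  have hyp0 : RR q p ((y : ℚ_[q]) ^ n) 0 0 0 := by
    obtain ⟨d, rfl⟩ := hpn
    refine ⟨(y : ℚ_[q]) ^ d, 1, pow_ne_zero _ (by exact_mod_cast hy0), ?_, by simp⟩
    rw [PadicInt.coe_one, mul_one, ← pow_mul, mul_comm]
  -- units
  have x1 : RR q p (mob X) 0 (-1) 0 := by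
    rw [hm1]; simpa using bm.div h30 bp
  have x2 : RR q p (mob (mob X)) (-1) 0 0 := by
    rw [hm2, show (-1 : ℚ_[q]) / X = -(X⁻¹) by rw [neg_div, one_div]]
    simpa using (b0.inv h30).neg hp
  have x3 : RR q p (mob (mob (mob X))) 0 1 0 := by
    rw [hm3]; simpa using (bp.div h30 bm).neg hp
  -- alphas
  have a1 : RR q p (mob X - 2) 0 (-1) 1 := by
    rw [hm1, show (X - 1) / (X + 1) - 2 = -((X + 3) / (X + 1)) by field_simp; ring]
    simpa using (b3.div h30 bp).neg hp
  have a2 : RR q p (mob (mob X) - 2) (-1) 0 1 := by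
    rw [hm2, show (-1) / X - 2 = -((2 * X + 1) / X) by field_simp; ring]
    simpa using (b4.div h30 b0).neg hp
  have a3 : RR q p (mob (mob (mob X)) - 2) 0 0 1 := by
    rw [hm3, show -((X + 1) / (X - 1)) - 2 = -((3 * X - 1) / (X - 1)) by field_simp; ring]
    simpa using (b5.div h30 bm).neg hp
  have hkq : (12 : ℚ_[q]) * k = (y : ℚ_[q]) ^ n + 7 := by exact_mod_cast hk.symm
  have a0 : RR q p (X - 2) 1 1 (-3) := by
    have hprod : (X - 2) * ((mob X - 2) * (mob (mob X) - 2) * (mob (mob (mob X)) - 2)) = (y : ℚ_[q]) ^ n := by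
      rw [hm3, hm2, hm1]
      have : (y : ℚ_[q]) ^ n = 12 * k - 7 := by linear_combination -hkq
      rw [this]
      field_simp
      unfold Rt at hR
      linear_combination (-6) * hR
    have hA := (a1.mul h30 a2).mul h30 a3
    have hne : (mob X - 2) * (mob (mob X) - 2) * (mob (mob (mob X)) - 2) ≠ 0 := by
      intro h0
      rw [h0, mul_zero] at hprod
      exact pow_ne_zero n (Nat.cast_ne_zero.2 hy0) hprod.symm
    rw [eq_div_of_mul_eq hne hprod]
    simpa using hyp0.div h30 hA
  -- etas
  have n0 : RR q p ((X - 1) ^ 2 / 2) (-1) 0 0 := by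
    simpa using (bm.pow h30 2).div h30 bt
  have n1 : RR q p ((mob X - 1) ^ 2 / 2) 1 (-2) 0 := by
    rw [hm1, show ((X - 1) / (X + 1) - 1) ^ 2 / 2 = 2 / (X + 1) ^ 2 by field_simp; ring]
    simpa using bt.div h30 (bp.pow h30 2)
  have n2 : RR q p ((mob (mob X) - 1) ^ 2 / 2) (-3) 2 0 := by
    rw [hm2, show ((-1) / X - 1) ^ 2 / 2 = (X + 1) ^ 2 / (2 * X ^ 2) by field_simp; ring]
    simpa using (bp.pow h30 2).div h30 (bt.mul h30 (b0.pow h30 2))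
  have n3 : RR q p ((mob (mob (mob X)) - 1) ^ 2 / 2) 3 0 0 := by
    rw [hm3, show (-((X + 1) / (X - 1)) - 1) ^ 2 / 2 = 2 * X ^ 2 / (X - 1) ^ 2 by field_simp; ring]
    simpa using (bt.mul h30 (b0.pow h30 2)).div h30 (bm.pow h30 2)
  refine ⟨RR.GG h30 a0 a1 a2 b0 x1 n0 _ _ _ _ _ _, RR.GG h30 a1 a2 a3 x1 x2 n1 _ _ _ _ _ _,
    RR.GG h30 a2 a3 ?_ x2 x3 n2 _ _ _ _ _ _, RR.GG h30 a3 ?_ ?_ x3 ?_ n3 _ _ _ _ _ _⟩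
  · rw [hm4]; exact a0
  · rw [hm4]; exact a0
  · rw [hm4]; exact a1
  · rw [hm4]; exact b0

end local_part

theorem independence (p : ℕ) (hp : p.Prime) (hodd : Odd p) (Q : Finset ℕ)
    (hQ : ∀ q ∈ Q, q.Prime ∧ ¬ q ∣ 30)
    (hQ2 : ∀ i j l : ℤ, (∀ q ∈ Q, ∀ _ : Fact q.Prime, ∃ z : ZMod q,
      z ^ p = (2 : ZMod q) ^ i * (3 : ZMod q) ^ j * (5 : ZMod q) ^ l) →
      (p : ℤ) ∣ i ∧ (p : ℤ) ∣ j ∧ (p : ℤ) ∣ l)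
    (k y n : ℕ) (hn : n ≠ 0) (hpn : p ∣ n) (hy0 : y ≠ 0) (hyQ : ∀ q ∈ Q, q ∣ y)
    (hk : y ^ n + 7 = 12 * k) (K : Type) [Field K] [NumberField K] (x : K) (σ : K ≃ₐ[ℚ] K)
    (hσ : σ x = mob x) (hx : Rt k x)
    (hlift : ∀ (L : Type) [Field L] [Algebra ℚ L] (z : L), Rt k z → ∃ f : K →ₐ[ℚ] L, f x = z)
    (e0 e1 e2 a b c : ℤ) (β : K) (hβ : GG e0 e1 e2 a b c x = β ^ p) :
    (p : ℤ) ∣ e0 ∧ (p : ℤ) ∣ e1 ∧ (p : ℤ) ∣ e2 ∧ (p : ℤ) ∣ a ∧ (p : ℤ) ∣ b ∧ (p : ℤ) ∣ c := by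
  have main : ∀ q ∈ Q, ∀ _ : Fact q.Prime, ∃ X : ℚ_[q], ∃ z : ℤ_[q], PadicInt.toZMod z = 2 ∧ X = z ∧
      Rt k X ∧ (∃ B, GG e0 e1 e2 a b c X = B ^ p) ∧ (∃ B, GG e0 e1 e2 a b c (mob X) = B ^ p) ∧
      (∃ B, GG e0 e1 e2 a b c (mob (mob X)) = B ^ p) ∧
      (∃ B, GG e0 e1 e2 a b c (mob (mob (mob X))) = B ^ p) := by
    intro q hq hF
    obtain ⟨z, hz, hR⟩ := hensel_root (hQ q hq).2 k y n hn (hyQ q hq) hk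
    obtain ⟨f, hf⟩ := hlift ℚ_[q] z hR
    have gf : ∀ w, f (GG e0 e1 e2 a b c w) = GG e0 e1 e2 a b c (f w) :=
      fun w => map_GG f.toRingHom e0 e1 e2 a b c w
    have mf : ∀ w, f (mob w) = mob (f w) := fun w => map_mob f.toRingHom w
    have gs : ∀ w, σ (GG e0 e1 e2 a b c w) = GG e0 e1 e2 a b c (σ w) :=
      fun w => map_GG (σ : K →ₐ[ℚ] K).toRingHom e0 e1 e2 a b c w
    have ms : ∀ w, σ (mob w) = mob (σ w) := fun w => map_mob (σ : K →ₐ[ℚ] K).toRingHom w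
    refine ⟨z, z, hz, rfl, hR, ⟨f β, ?_⟩, ⟨f (σ β), ?_⟩, ⟨f (σ (σ β)), ?_⟩, ⟨f (σ (σ (σ β))), ?_⟩⟩
    · rw [← map_pow, ← hβ, gf, hf]
    · rw [← map_pow, ← map_pow, ← hβ, gs, gf, hσ, mf, hf]
    · rw [← map_pow, ← map_pow, ← map_pow, ← hβ, gs, gs, gf, hσ, ms, hσ, mf, mf, hf]
    · rw [← map_pow, ← map_pow, ← map_pow, ← map_pow, ← hβ, gs, gs, gs, gf, hσ, ms, hσ, ms, ms,
        hσ, mf, mf, mf, hf]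
  have pl0 := hQ2 _ _ _ (fun q hq hF => by
    obtain ⟨X, z, hz, hX, hR, ⟨B, h0⟩, h1, h2, h3⟩ := main q hq hF
    have h := (local_facts (hQ q hq).2 hodd k y n hpn hk hy0 z hz X hX hR e0 e1 e2 a b c).1
    rw [h0] at h
    exact RR.final (hQ q hq).2 hp.ne_zero h)
  have pl1 := hQ2 _ _ _ (fun q hq hF => by
    obtain ⟨X, z, hz, hX, hR, h0, ⟨B, h1⟩, h2, h3⟩ := main q hq hF
    have h := (local_facts (hQ q hq).2 hodd k y n hpn hk hy0 z hz X hX hR e0 e1 e2 a b c).2.1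
    rw [h1] at h
    exact RR.final (hQ q hq).2 hp.ne_zero h)
  have pl2 := hQ2 _ _ _ (fun q hq hF => by
    obtain ⟨X, z, hz, hX, hR, h0, h1, ⟨B, h2⟩, h3⟩ := main q hq hF
    have h := (local_facts (hQ q hq).2 hodd k y n hpn hk hy0 z hz X hX hR e0 e1 e2 a b c).2.2.1
    rw [h2] at h
    exact RR.final (hQ q hq).2 hp.ne_zero h)
  have pl3 := hQ2 _ _ _ (fun q hq hF => by
    obtain ⟨X, z, hz, hX, hR, h0, h1, h2, ⟨B, h3⟩⟩ := main q hq hF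
    have h := (local_facts (hQ q hq).2 hodd k y n hpn hk hy0 z hz X hX hR e0 e1 e2 a b c).2.2.2
    rw [h3] at h
    exact RR.final (hQ q hq).2 hp.ne_zero h)
  have hcop : ∀ m : ℤ, (p : ℤ) ∣ 4 * m → (p : ℤ) ∣ m := by
    intro m hm
    rcases (Nat.prime_iff_prime_int.1 hp).dvd_or_dvd hm with h | h
    · exfalso
      have h4 : p ∣ 2 ^ 2 := by exact_mod_cast h
      have := (Nat.prime_dvd_prime_iff_eq hp Nat.prime_two).1 (hp.dvd_of_dvd_pow h4)
      subst this
      exact absurd hodd (by decide)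
    · exact h
  obtain ⟨⟨u0, hu0⟩, ⟨v0, hv0⟩, ⟨w0, hw0⟩⟩ := pl0
  obtain ⟨⟨u1, hu1⟩, -, ⟨w1, hw1⟩⟩ := pl1
  obtain ⟨-, -, ⟨w2, hw2⟩⟩ := pl2
  obtain ⟨-, -, ⟨w3, hw3⟩⟩ := pl3
  have d0 : (p : ℤ) ∣ e0 := hcop _ ⟨w1 - w0, by linear_combination hw1 - hw0⟩
  have d2 : (p : ℤ) ∣ e2 := hcop _ ⟨w1 - w2, by linear_combination hw1 - hw2⟩
  have d1 : (p : ℤ) ∣ e1 := hcop _ ⟨w1 - w3, by linear_combination hw1 - hw3⟩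
  have db : (p : ℤ) ∣ b := by
    obtain ⟨s0, h0⟩ := d0
    obtain ⟨s1, h1⟩ := d1
    exact ⟨s0 - s1 - v0, by linear_combination h0 - h1 - hv0⟩
  have dc : (p : ℤ) ∣ c := by
    obtain ⟨s0, h0⟩ := db
    obtain ⟨s1, h1⟩ := d1
    exact ⟨u1 + s1 + s0, by linear_combination hu1 + h1 + h0⟩
  have da : (p : ℤ) ∣ a := by
    obtain ⟨s0, h0⟩ := d0
    obtain ⟨s1, h1⟩ := d2
    obtain ⟨s2, h2⟩ := dc
    exact ⟨u0 - s0 + s1 + s2, by linear_combination hu0 - h0 + h1 + h2⟩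
  exact ⟨d0, d1, d2, da, db, dc⟩
end CQ

namespace CQ

lemma torsion_sq {K : Type*} [Field K] [NumberField K] (hT : TotallyReal K) (t : (𝓞 K)ˣ)
    (ht : t ∈ NumberField.Units.torsion K) : t ^ 2 = 1 := by
  obtain ⟨φ⟩ : Nonempty (K →+* ℂ) := inferInstance
  have h1 : IsOfFinOrder t := ht
  obtain ⟨m, hm, hm1⟩ := isOfFinOrder_iff_pow_eq_one.1 h1
  have h2 : (t : K) ^ m = 1 := by
    rw [← NumberField.Units.coe_pow, hm1, NumberField.Units.coe_one]
  have h3 : (φ (t : K)) ^ m = 1 := by rw [← map_pow, h2, map_one]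
  have h4 : ‖φ (t : K)‖ = 1 := Complex.norm_eq_one_of_pow_eq_one h3 hm.ne'
  have him := hT φ (t : K)
  have h5 : (φ (t : K)) ^ 2 = 1 := by
    have hre : φ (t : K) = ((φ (t : K)).re : ℂ) := by
      apply Complex.ext <;> simp [him]
    rw [hre] at h4 ⊢
    rw [Complex.norm_real] at h4
    have : (φ (t : K)).re ^ 2 = 1 := by
      rw [← sq_abs, ← Real.norm_eq_abs, h4, one_pow]
    exact_mod_cast this
  apply NumberField.Units.coe_injective K
  beta_reduce
  rw [NumberField.Units.coe_pow, NumberField.Units.coe_one]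
  apply φ.injective
  rw [map_pow, h5, map_one]

lemma unit_rank_le {K : Type*} [Field K] [NumberField K] (h4 : Module.finrank ℚ K = 4) :
    NumberField.Units.rank K ≤ 3 := by
  unfold NumberField.Units.rank
  have : Fintype.card (InfinitePlace K) ≤ Fintype.card (K →+* ℂ) :=
    Fintype.card_le_of_surjective (fun φ => InfinitePlace.mk φ)
      (fun w => ⟨w.embedding, InfinitePlace.mk_embedding w⟩)
  rw [NumberField.Embeddings.card, h4] at this
  omega

lemma zsum {G ι : Type*} [CommGroup G] (s : Finset ι) (g : G) (f : ι → ℤ) :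
    g ^ (∑ i ∈ s, f i) = ∏ i ∈ s, g ^ f i := by
  classical
  induction s using Finset.induction_on with
  | empty => simp
  | insert a s ha ih => rw [Finset.sum_insert ha, Finset.prod_insert ha, zpow_add, ih]

lemma unit_dep {K : Type*} [Field K] [NumberField K] (hT : TotallyReal K)
    (h4 : Module.finrank ℚ K = 4) (p : ℕ) (hp : p.Prime) (hodd : Odd p) (u : Fin 4 → (𝓞 K)ˣ) :
    ∃ c : Fin 4 → ℤ, (∃ i, ¬ (p : ℤ) ∣ c i) ∧ ∃ v : (𝓞 K)ˣ, ∏ i, u i ^ c i = v ^ p := by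
  have := Fact.mk hp
  choose ζe hζ _ using fun i => NumberField.Units.exist_unique_eq_mul_prod K (u i)
  let r := NumberField.Units.rank K
  let M : Fin 4 → (Fin r → ZMod p) := fun i j => ((ζe i).2 j : ZMod p)
  have hM : ¬ LinearIndependent (ZMod p) M := by
    intro h
    have := h.fintype_card_le_finrank
    simp at this
    have h3 := unit_rank_le h4
    omega
  rw [Fintype.not_linearIndependent_iff] at hM
  obtain ⟨g, hg, i, hi⟩ := hM
  let c : Fin 4 → ℤ := fun i => ((g i).val : ℤ)
  have hc : ∀ i, ((c i : ℤ) : ZMod p) = g i := fun i => by simp [c]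
  refine ⟨c, ⟨i, fun h => hi ?_⟩, ?_⟩
  · rw [← ZMod.intCast_zmod_eq_zero_iff_dvd] at h
    · rw [← hc i, h]
  have hj : ∀ j, (p : ℤ) ∣ ∑ i, c i * (ζe i).2 j := by
    intro j
    rw [← ZMod.intCast_zmod_eq_zero_iff_dvd]
    have := congrFun hg j
    simp only [Finset.sum_apply, Pi.smul_apply, smul_eq_mul, M, Pi.zero_apply] at this
    push_cast
    simp only [hc]
    exact this
  choose d hd using hj
  let t : (𝓞 K)ˣ := ∏ i, ((ζe i).1 : (𝓞 K)ˣ) ^ c i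
  have ht : t ^ p = t := by
    have h2 : t ^ 2 = 1 := torsion_sq hT t (Subgroup.prod_mem _ fun i _ => Subgroup.zpow_mem _ (ζe i).1.2 _)
    obtain ⟨m, rfl⟩ := hodd
    rw [pow_succ, pow_mul, h2, one_pow, one_mul]
  refine ⟨t * ∏ j, NumberField.Units.fundSystem K j ^ d j, ?_⟩
  rw [mul_pow, ht, ← Finset.prod_pow]
  have : ∀ i, u i ^ c i = ((ζe i).1 : (𝓞 K)ˣ) ^ c i *
      ∏ j, NumberField.Units.fundSystem K j ^ (c i * (ζe i).2 j) := by
    intro i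
    conv_lhs => rw [hζ i]
    rw [mul_zpow, ← Finset.prod_zpow]
    congr 1
    refine Finset.prod_congr rfl fun j _ => ?_
    rw [← zpow_mul, mul_comm]
  rw [Finset.prod_congr rfl fun i _ => this i, Finset.prod_mul_distrib]
  congr 1
  rw [Finset.prod_comm]
  refine Finset.prod_congr rfl fun j _ => ?_
  rw [← zpow_natCast, ← zpow_mul, mul_comm (d j), ← hd j, zsum]
end CQ

namespace CQ

lemma classgroup_rank {R : Type*} [CommRing R] [IsDedekindDomain R] (n : ℕ) (hn : n ≠ 0)
    (α : Fin 3 → R) (hα : ∀ i, α i ≠ 0) (A : Fin 3 → Ideal R)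
    (hA : ∀ i, Ideal.span {α i} = A i ^ n)
    (H : ∀ p : ℕ, p.Prime → p ∣ n → ∀ e : Fin 3 → ℕ, ∀ ε : Rˣ, ∀ γ : R,
      ∏ i, α i ^ e i = ε * γ ^ p → ∀ i, p ∣ e i) :
    HasZModRankGE (ClassGroup R) n 3 := by
  have := NeZero.mk hn
  have hA0 : ∀ i, A i ∈ nonZeroDivisors (Ideal R) := by
    intro i
    apply mem_nonZeroDivisors_of_ne_zero
    intro h
    have := hA i
    rw [h, zero_pow hn] at this
    exact hα i (Ideal.span_singleton_eq_bot.1 this)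
  let g : Fin 3 → ClassGroup R := fun i => ClassGroup.mk0 ⟨A i, hA0 i⟩
  have hg : ∀ i, g i ^ n = 1 := by
    intro i
    simp only [g]
    rw [← map_pow, SubmonoidClass.mk_pow, ClassGroup.mk0_eq_one_iff, ← hA i]
    exact ⟨⟨α i, rfl⟩⟩
  have key : ∀ E : Fin 3 → ℕ, ∏ i, g i ^ E i = 1 → ∀ i, n ∣ E i := by
    intro E hE
    have hpr : (∏ i, A i ^ E i).IsPrincipal := by
      have hmem : (∏ i, A i ^ E i) ∈ nonZeroDivisors (Ideal R) :=
        Submonoid.prod_mem _ fun i _ => Submonoid.pow_mem _ (hA0 i) _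
      rw [← ClassGroup.mk0_eq_one_iff hmem, ← hE]
      simp only [g]
      simp only [← map_pow, ← map_prod]
      congr 1
    obtain ⟨β, hβ⟩ := hpr.principal
    let d := Nat.gcd n (Finset.univ.gcd E)
    have hdn : d ∣ n := Nat.gcd_dvd_left _ _
    have hdE : ∀ i, d ∣ E i := fun i => (Nat.gcd_dvd_right _ _).trans (Finset.gcd_dvd (Finset.mem_univ i))
    have hd0 : 0 < d := Nat.gcd_pos_of_pos_left _ (Nat.pos_of_ne_zero hn)
    by_cases hd : d = n
    · rw [← hd]; exact hdE
    exfalso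
    obtain ⟨m, hm⟩ := hdn
    have hm1 : m ≠ 1 := by rintro rfl; omega
    obtain ⟨p, hp, m', rfl⟩ := Nat.exists_prime_and_dvd hm1
    choose E' hE' using hdE
    have h1 : ∏ i, Ideal.span {α i} ^ E' i = Ideal.span {β ^ (p * m')} := by
      rw [← Ideal.span_singleton_pow]
      have : Ideal.span {β} = ∏ i, A i ^ E i := hβ.symm
      rw [this, ← Finset.prod_pow]
      refine Finset.prod_congr rfl fun i _ => ?_
      rw [hA i, ← pow_mul, ← pow_mul, hE' i, hm]
      congr 1; ring
    simp only [Ideal.span_singleton_pow, Ideal.prod_span_singleton] at h1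
    rw [Ideal.span_singleton_eq_span_singleton] at h1
    obtain ⟨ε, hε⟩ := h1.symm
    have h2 := H p hp (by rw [hm]; exact ⟨d * m', by ring⟩) E' ε (β ^ m') (by
      rw [← hε, ← pow_mul, mul_comm, mul_comm m'])
    have h3 : d * p ∣ d := by
      apply Nat.dvd_gcd
      · rw [hm]; exact ⟨m', by ring⟩
      · apply Finset.dvd_gcd
        intro i _
        rw [hE' i]
        exact Nat.mul_dvd_mul_left _ (h2 i)
    have := Nat.le_of_dvd hd0 h3
    have := hp.two_le
    nlinarith
  let L : Fin 3 → (ZMod n →+ Additive (ClassGroup R)) := fun i =>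
    ZMod.lift n ⟨zmultiplesHom _ (Additive.ofMul (g i)), by
      simp only [zmultiplesHom_apply, natCast_zsmul, ← ofMul_pow, hg i, ofMul_one]⟩
  let Φ : (Fin 3 → ZMod n) →+ Additive (ClassGroup R) :=
    ∑ i, (L i).comp (Pi.evalAddMonoidHom (fun _ => ZMod n) i)
  refine ⟨AddMonoidHom.toMultiplicativeLeft Φ, ?_⟩
  rw [injective_iff_map_eq_one]
  intro v hv
  have hv' : Φ v.toAdd = 0 := hv
  have hL : ∀ i, ∀ z : ZMod n, L i z = Additive.ofMul (g i ^ z.val) := by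
    intro i z
    conv_lhs => rw [← ZMod.natCast_zmod_val z]
    have := ZMod.lift_coe n ⟨zmultiplesHom _ (Additive.ofMul (g i)), by
      simp only [zmultiplesHom_apply, natCast_zsmul, ← ofMul_pow, hg i, ofMul_one]⟩ (z.val : ℤ)
    rw [Int.cast_natCast] at this
    refine this.trans ?_
    simp only [zmultiplesHom_apply, natCast_zsmul, ofMul_pow]
  have h1 := key (fun i => (v.toAdd i).val) (by
    have : Φ v.toAdd = Additive.ofMul (∏ i, g i ^ (v.toAdd i).val) := by
      simp only [Φ, AddMonoidHom.finsetSum_apply, AddMonoidHom.comp_apply, Pi.evalAddMonoidHom_apply,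
        hL, ofMul_prod]
    rw [this] at hv'
    exact hv')
  have : v.toAdd = 0 := by
    funext i
    rw [← ZMod.natCast_zmod_val (v.toAdd i), Pi.zero_apply, ZMod.natCast_eq_zero_iff]
    exact h1 i
  exact this
end CQ

namespace CQ

/-- The finite set of auxiliary primes attached to `p`. -/
noncomputable def Qset (p : ℕ) : Finset ℕ :=
  open Classical in if h : p.Prime then Classical.choose (two_three_five p h) else ∅

lemma Qset_spec (p : ℕ) (hp : p.Prime) : (∀ q ∈ Qset p, q.Prime ∧ ¬ q ∣ 30) ∧
    ∀ i j l : ℤ, (∀ q ∈ Qset p, ∀ _ : Fact q.Prime, ∃ z : ZMod q,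
      z ^ p = (2 : ZMod q) ^ i * (3 : ZMod q) ^ j * (5 : ZMod q) ^ l) →
      (p : ℤ) ∣ i ∧ (p : ℤ) ∣ j ∧ (p : ℤ) ∣ l := by
  have : Qset p = Classical.choose (two_three_five p hp) := by simp [Qset, hp]
  rw [this]
  exact Classical.choose_spec (two_three_five p hp)

section
variable {K : Type} [Field K] [NumberField K] {k : ℕ} {x : K}

lemma unit_of_integral {a b : K} (ha : IsIntegral ℤ a) (hb : IsIntegral ℤ b) (hab : a * b = 1) :
    ∃ u : (𝓞 K)ˣ, (u : K) = a := by
  let a' : 𝓞 K := ⟨a, ha⟩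
  let b' : 𝓞 K := ⟨b, hb⟩
  have h : a' * b' = 1 := RingOfIntegers.ext hab
  exact ⟨⟨a', b', h, by rw [mul_comm, h]⟩, rfl⟩

lemma Rt.integral (hx : Rt k x) : IsIntegral ℤ x := by
  refine ⟨X ^ 4 + C (2 * (k : ℤ)) * X ^ 3 - C 6 * X ^ 2 - C (2 * (k : ℤ)) * X + 1, ?_, ?_⟩
  · monicity!
  · unfold Rt at hx
    simpa using hx

lemma Rt.mob2 (hx : Rt k x) : CQ.mob (CQ.mob x) = -1 / x := CQ.mob2 hx

lemma Rt.unit (hx : Rt k x) : ∃ u : (𝓞 K)ˣ, (u : K) = x := by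
  have h2 : IsIntegral ℤ (-1 / x) := by
    rw [← hx.mob2]; exact hx.mob.mob.integral
  exact unit_of_integral hx.integral h2.neg (by have := hx.ne_zero; field_simp)

lemma Rt.eta_integral (hx : Rt k x) : IsIntegral ℤ ((x - 1) ^ 2 / 2) := by
  let x' : 𝓞 K := ⟨x, hx.integral⟩
  have hx' : algebraMap (𝓞 K) K x' = x := rfl
  have : IsIntegral (𝓞 K) ((x - 1) ^ 2 / 2) := by
    obtain ⟨A, hA⟩ : ∃ A : 𝓞 K, algebraMap (𝓞 K) K A = (2 + (k : K)) * (x - 1) + 3 * k :=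
      ⟨(2 + (k : 𝓞 K)) * (x' - 1) + 3 * k, by
        simp only [map_add, map_sub, map_mul, map_neg, map_natCast, map_ofNat, map_one, hx']⟩
    obtain ⟨B, hB⟩ : ∃ B : 𝓞 K, algebraMap (𝓞 K) K B = -(2 - (k : K)) * (x - 1) - 1 :=
      ⟨-(2 - (k : 𝓞 K)) * (x' - 1) - 1, by
        simp only [map_add, map_sub, map_mul, map_neg, map_natCast, map_ofNat, map_one, hx']⟩
    refine ⟨X ^ 2 + C A * X + C B, ?_, ?_⟩
    · monicity!
    · simp only [eval₂_add, eval₂_mul, eval₂_pow, eval₂_X, eval₂_C, hA, hB]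
      unfold Rt at hx
      linear_combination (1 / 4) * hx
  exact isIntegral_trans (R := ℤ) (A := 𝓞 K) _ this

lemma Rt.eta_unit (hx : Rt k x) : ∃ u : (𝓞 K)ˣ, (u : K) = (x - 1) ^ 2 / 2 := by
  obtain ⟨u, hu⟩ := hx.mob.unit
  refine unit_of_integral hx.eta_integral
    (hx.mob.eta_integral.mul ((RingOfIntegers.isIntegral_coe ((u⁻¹ : (𝓞 K)ˣ) : 𝓞 K)).pow 2)) ?_
  have h1 : ((u⁻¹ : (𝓞 K)ˣ) : K) = (CQ.mob x)⁻¹ := by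
    rw [← hu]
    refine eq_inv_of_mul_eq_one_left ?_
    rw [← NumberField.Units.coe_mul, inv_mul_cancel, NumberField.Units.coe_one]
  rw [h1]
  have := hx.ne_zero
  have := hx.add_one
  have := hx.sub_one
  unfold CQ.mob
  field_simp
  ring

end

lemma mob3 {L : Type*} [Field L] [CharZero L] {k : ℕ} {x : L} (hR : Rt k x) :
    mob (mob (mob x)) = -((x + 1) / (x - 1)) := by
  have := hR.ne_zero
  have := hR.add_one
  have := hR.sub_one
  rw [mob2 hR.mob]
  unfold mob
  field_simp

lemma alpha_prod {L : Type*} [Field L] [CharZero L] {k : ℕ} {x : L} (hR : Rt k x) (y n : ℕ)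
    (hk : y ^ n + 7 = 12 * k) :
    (x - 2) * (mob x - 2) * (mob (mob x) - 2) * (mob (mob (mob x)) - 2) = (y : L) ^ n := by
  have := hR.ne_zero
  have := hR.add_one
  have := hR.sub_one
  have hkq : (12 : L) * k = (y : L) ^ n + 7 := by exact_mod_cast hk.symm
  rw [mob3 hR, mob2 hR]
  unfold mob
  have : (y : L) ^ n = 12 * k - 7 := by linear_combination -hkq
  rw [this]
  field_simp
  unfold Rt at hR
  linear_combination (-6) * hR

lemma coprime_aux {R : Type*} [CommRing R] (a b r s t : R) (y n : ℕ) (h5 : ¬ 5 ∣ y)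
    (hy : (y : R) ^ n = a * r) (h : (5 : R) = s * a + t * b) : IsCoprime a b := by
  have hc : IsCoprime (5 : ℤ) ((y : ℤ) ^ n) := by
    apply IsCoprime.pow_right
    exact_mod_cast (Nat.isCoprime_iff_coprime (m := 5) (n := y)).2
      ((Nat.Prime.coprime_iff_not_dvd (by norm_num)).2 h5)
  obtain ⟨u, v, huv⟩ := hc
  have h1 := congrArg (fun z : ℤ => (z : R)) huv
  push_cast at h1
  rw [hy, h] at h1
  exact ⟨u * s + v * r, u * t, by linear_combination h1⟩

theorem class_rank (n : ℕ) (hn : n ≠ 0) (hodd : Odd n) (k y : ℕ) (hk : y ^ n + 7 = 12 * k)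
    (hy0 : y ≠ 0) (hy5 : ¬ 5 ∣ y) (hyQ : ∀ p ∈ n.primeFactors, ∀ q ∈ Qset p, q ∣ y)
    (K : Type) [Field K] [NumberField K] (hT : TotallyReal K) (h4 : Module.finrank ℚ K = 4)
    (x : K) (σ : K ≃ₐ[ℚ] K) (hσ : σ x = mob x) (hx : Rt k x)
    (hlift : ∀ (L : Type) [Field L] [Algebra ℚ L] (z : L), Rt k z → ∃ f : K →ₐ[ℚ] L, f x = z) :
    HasZModRankGE (ClassGroup (𝓞 K)) n 3 := by
  have r1 := hx.mob
  have r2 := r1.mob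
  have r3 := r2.mob
  have r4 : mob (mob (mob (mob x))) = x := by
    rw [mob2 r2, mob2 hx]; have := hx.ne_zero; field_simp
  let s : Fin 4 → 𝓞 K := ![⟨x, hx.integral⟩, ⟨mob x, r1.integral⟩, ⟨mob (mob x), r2.integral⟩,
    ⟨mob (mob (mob x)), r3.integral⟩]
  have hs0 : algebraMap (𝓞 K) K (s 0) = x := rfl
  have hs1 : algebraMap (𝓞 K) K (s 1) = mob x := rfl
  have hs2 : algebraMap (𝓞 K) K (s 2) = mob (mob x) := rfl
  have hs3 : algebraMap (𝓞 K) K (s 3) = mob (mob (mob x)) := rfl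
  let α : Fin 4 → 𝓞 K := fun i => s i - 2
  have hα : ∀ i, α i = s i - 2 := fun i => rfl
  have inj := RingOfIntegers.coe_injective (K := K)
  have hprod : α 0 * α 1 * α 2 * α 3 = (y : 𝓞 K) ^ n := by
    apply inj
    simp only [hα, map_mul, map_sub, map_pow, map_natCast, map_ofNat, hs0, hs1, hs2, hs3]
    exact alpha_prod hx y n hk
  have step : ∀ {w : K}, Rt k w → mob w * (w + 1) = w - 1 := by
    intro w hw
    unfold mob
    have := hw.add_one
    field_simp
  have step2 : ∀ {w : K}, Rt k w → w * mob (mob w) = -1 := by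
    intro w hw
    rw [mob2 hw]
    have := hw.ne_zero
    field_simp
  have e01 : s 1 * (s 0 + 1) = s 0 - 1 := inj (by simpa [hs0, hs1] using step hx)
  have e12 : s 2 * (s 1 + 1) = s 1 - 1 := inj (by simpa [hs2, hs1] using step r1)
  have e23 : s 3 * (s 2 + 1) = s 2 - 1 := inj (by simpa [hs2, hs3] using step r2)
  have e30 : s 0 * (s 3 + 1) = s 3 - 1 := inj (by simpa [hs0, hs3, r4] using step r3)
  have e02 : s 0 * s 2 = -1 := inj (by simpa [hs0, hs2] using step2 hx)
  have e13 : s 1 * s 3 = -1 := inj (by simpa [hs1, hs3] using step2 r1)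
  have c01 : IsCoprime (α 0) (α 1) :=
    coprime_aux _ _ (α 1 * α 2 * α 3) (-1) (-3 - α 0) y n hy5 (by rw [← hprod]; ring)
      (by simp only [hα]; linear_combination e01)
  have c12 : IsCoprime (α 1) (α 2) :=
    coprime_aux _ _ (α 0 * α 2 * α 3) (-1) (-3 - α 1) y n hy5 (by rw [← hprod]; ring)
      (by simp only [hα]; linear_combination e12)
  have c23 : IsCoprime (α 2) (α 3) :=
    coprime_aux _ _ (α 0 * α 1 * α 3) (-1) (-3 - α 2) y n hy5 (by rw [← hprod]; ring)
      (by simp only [hα]; linear_combination e23)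
  have c30 : IsCoprime (α 3) (α 0) :=
    coprime_aux _ _ (α 0 * α 1 * α 2) (-1) (-3 - α 3) y n hy5 (by rw [← hprod]; ring)
      (by simp only [hα]; linear_combination e30)
  have c02 : IsCoprime (α 0) (α 2) :=
    coprime_aux _ _ (α 1 * α 2 * α 3) (-2) (-2 - α 0) y n hy5 (by rw [← hprod]; ring)
      (by simp only [hα]; linear_combination e02)
  have c13 : IsCoprime (α 1) (α 3) :=
    coprime_aux _ _ (α 0 * α 2 * α 3) (-2) (-2 - α 1) y n hy5 (by rw [← hprod]; ring)
      (by simp only [hα]; linear_combination e13)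
  have hcop : ∀ i j, i ≠ j → IsCoprime (Ideal.span {α i}) (Ideal.span {α j}) := by
    intro i j hij
    rw [Ideal.isCoprime_span_singleton_iff]
    fin_cases i <;> fin_cases j <;> first
      | exact absurd rfl hij
      | exact c01
      | exact c01.symm
      | exact c12
      | exact c12.symm
      | exact c23
      | exact c23.symm
      | exact c30
      | exact c30.symm
      | exact c02
      | exact c02.symm
      | exact c13
      | exact c13.symm
  have hroot := Finset.exists_eq_pow_of_mul_eq_pow_of_coprime (n := n) (c := Ideal.span {(y : 𝓞 K)})
    (s := Finset.univ) (f := fun i => Ideal.span {α i}) (fun i _ j _ hij => hcop i j hij) (by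
      rw [Ideal.prod_span_singleton, Ideal.span_singleton_pow, ← hprod, Fin.prod_univ_four])
  choose A hA using fun i => hroot i (Finset.mem_univ i)
  have hα0 : ∀ i, α i ≠ 0 := by
    intro i hi
    have h0 : α 0 * α 1 * α 2 * α 3 = 0 := by
      rw [← Fin.prod_univ_four]
      exact Finset.prod_eq_zero (Finset.mem_univ i) hi
    rw [hprod] at h0
    exact pow_ne_zero n (Nat.cast_ne_zero.2 hy0) h0
  obtain ⟨ux, hux⟩ := hx.unit
  obtain ⟨us, hus⟩ := r1.unit
  obtain ⟨ue, hue⟩ := hx.eta_unit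
  refine classgroup_rank n hn (fun i => α i.castSucc) (fun i => hα0 _) (fun i => A i.castSucc)
    (fun i => hA _) ?_
  intro p hp hpn e ε γ he
  have hpodd : Odd p := hodd.of_dvd_nat hpn
  obtain ⟨c, ⟨i, hi⟩, v, hv⟩ := unit_dep hT h4 p hp hpodd ![ux, us, ue, ε]
  rw [Fin.prod_univ_four] at hv
  have hvK := congrArg (fun u : (𝓞 K)ˣ => (u : K)) hv
  simp only [NumberField.Units.coe_mul, NumberField.Units.coe_zpow, NumberField.Units.coe_pow] at hvK
  have heK := congrArg (fun u : 𝓞 K => (u : K)) he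
  rw [Fin.prod_univ_three] at heK
  have hvK' : x ^ c 0 * (mob x) ^ c 1 * ((x - 1) ^ 2 / 2) ^ c 2 * (ε : K) ^ c 3 = (v : K) ^ p := by
    rw [← hvK, ← hue, ← hus]
    nth_rewrite 1 [← hux]
    rfl
  have heK' : (x - 2) ^ e 0 * (mob x - 2) ^ e 1 * (mob (mob x) - 2) ^ e 2 = (ε : K) * (γ : K) ^ p := by
    have t0 : α (Fin.castSucc 0) = s 0 - 2 := rfl
    have t1 : α (Fin.castSucc 1) = s 1 - 2 := rfl
    have t2 : α (Fin.castSucc 2) = s 2 - 2 := rfl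
    rw [t0, t1, t2] at heK
    simp only [map_mul, map_sub, map_pow, map_ofNat, hs0, hs1, hs2] at heK
    exact heK
  have hG : GG (c 3 * e 0) (c 3 * e 1) (c 3 * e 2) (c 0) (c 1) (c 2) x = ((v : K) * (γ : K) ^ c 3) ^ p := by
    have h1 := congrArg (fun z : K => z ^ c 3) heK'
    simp only [mul_zpow] at h1
    unfold GG
    rw [mul_pow, ← hvK']
    have e1 : ∀ (z : K) (m : ℕ), z ^ (c 3 * (m : ℤ)) = (z ^ m) ^ c 3 := by
      intro z m
      rw [mul_comm, zpow_mul, zpow_natCast]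
    have e2 : ((γ : K) ^ c 3) ^ p = ((γ : K) ^ p) ^ c 3 := by
      rw [← zpow_natCast, ← zpow_mul, mul_comm, zpow_mul, zpow_natCast]
    rw [e1, e1, e1, e2, h1]
    ring
  have hmem : p ∈ n.primeFactors := Nat.mem_primeFactors.2 ⟨hp, hpn, hn⟩
  obtain ⟨d0, d1, d2, da, db, dc⟩ := independence p hp hpodd (Qset p) (Qset_spec p hp).1 (Qset_spec p hp).2
    k y n hn hpn hy0 (hyQ p hmem) hk K x σ hσ hx hlift _ _ _ _ _ _ _ hG
  have hc3 : ¬ (p : ℤ) ∣ c 3 := by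
    fin_cases i
    · exact absurd da hi
    · exact absurd db hi
    · exact absurd dc hi
    · exact hi
  have hP := Nat.prime_iff_prime_int.1 hp
  intro j
  fin_cases j
  · exact Int.natCast_dvd_natCast.1 ((hP.dvd_or_dvd d0).resolve_left hc3)
  · exact Int.natCast_dvd_natCast.1 ((hP.dvd_or_dvd d1).resolve_left hc3)
  · exact Int.natCast_dvd_natCast.1 ((hP.dvd_or_dvd d2).resolve_left hc3)
end CQ

namespace CQ

lemma pow_mod12 (n y : ℕ) (hodd : Odd n) (hy : y % 12 = 5) : ∃ k, y ^ n + 7 = 12 * k := by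
  obtain ⟨m, rfl⟩ := hodd
  have h : y ^ (2 * m + 1) ≡ 5 [MOD 12] := by
    have h1 : y ≡ 5 [MOD 12] := hy
    have h2 : y ^ (2 * m + 1) ≡ 5 ^ (2 * m + 1) [MOD 12] := h1.pow _
    have h3 : 5 ^ (2 * m + 1) ≡ 5 [MOD 12] := by
      have : 5 ^ 2 ≡ 1 [MOD 12] := rfl
      have := (this.pow m).mul_right 5
      rw [← pow_mul, ← pow_succ, one_pow, one_mul] at this
      exact this
    exact h2.trans h3
  unfold Nat.ModEq at h
  have : 12 ∣ y ^ (2 * m + 1) + 7 := by omega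
  exact this

lemma exists_prime_r (n : ℕ) (hn : 1 < n) (hodd : Odd n) (N : ℕ) :
    ∃ r, N < r ∧ r.Prime ∧ r % 4 = 1 ∧ (r - 1).Coprime n := by
  have hc4 : Nat.Coprime 4 n := by
    rw [show 4 = 2 ^ 2 by norm_num]
    exact (Nat.coprime_two_left.2 hodd).pow_left 2
  obtain ⟨a, ha4, han⟩ := Nat.chineseRemainder hc4 1 2
  have hq0 : NeZero (4 * n) := ⟨by omega⟩
  have hca : Nat.Coprime a (4 * n) := by
    apply Nat.Coprime.mul_right
    · have := ha4.gcd_eq; simpa [Nat.Coprime] using this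
    · have := han.gcd_eq
      unfold Nat.Coprime
      rw [this]
      exact Nat.coprime_two_left.2 hodd
  have hu : IsUnit (a : ZMod (4 * n)) := (ZMod.isUnit_iff_coprime a (4 * n)).2 hca
  obtain ⟨r, hr, hrp, hra⟩ := Nat.forall_exists_prime_gt_and_eq_mod hu N
  rw [ZMod.natCast_eq_natCast_iff] at hra
  have h4 : r ≡ 1 [MOD 4] := (hra.of_mul_right n).trans ha4
  have h2 : r ≡ 2 [MOD n] := (hra.of_mul_left 4).trans han
  refine ⟨r, hr, hrp, h4, ?_⟩
  have : r - 1 ≡ 1 [MOD n] := by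
    have h1 : (r - 1) + 1 ≡ 1 + 1 [MOD n] := by
      rw [Nat.sub_add_cancel hrp.one_le]; exact h2
    exact Nat.ModEq.add_right_cancel' 1 h1
  unfold Nat.Coprime
  rw [this.gcd_eq, Nat.gcd_one_left]

lemma exists_y0 (n r : ℕ) [hr : Fact r.Prime] (hr5 : 5 < r) (hr4 : r % 4 = 1) (hc : (r - 1).Coprime n) :
    ∃ z : ZMod r, z ≠ 0 ∧ (z ^ n + 7) ^ 2 + 576 = 0 := by
  obtain ⟨i, hi⟩ := ZMod.exists_sq_eq_neg_one_iff.2 (show r % 4 ≠ 3 by omega)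
  let c : ZMod r := -7 + 24 * i
  have hc0 : c ≠ 0 := by
    intro h
    have : ((625 : ℕ) : ZMod r) = 0 := by
      push_cast
      have h2 : c * (-7 - 24 * i) = 625 := by
        simp only [c]; linear_combination 576 * hi
      rw [← h2, h, zero_mul]
    rw [ZMod.natCast_eq_zero_iff, show 625 = 5 ^ 4 by norm_num] at this
    have := Nat.le_of_dvd (by norm_num) (hr.out.dvd_of_dvd_pow this)
    omega
  have hcard : (Nat.card (ZMod r)ˣ).Coprime n := by
    rw [Nat.card_eq_fintype_card, ZMod.card_units]; exact hc
  obtain ⟨z, hz⟩ := (powCoprime hcard).surjective (Units.mk0 c hc0)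
  refine ⟨z, z.ne_zero, ?_⟩
  have : (z : ZMod r) ^ n = c := by
    have := congrArg (fun u : (ZMod r)ˣ => (u : ZMod r)) hz
    simpa using this
  rw [this]
  simp only [c]
  linear_combination (-576) * hi

lemma choose_y (n : ℕ) (hn : 1 < n) (hodd : Odd n) (M : ℕ) (hM : Nat.Coprime 30 M) (hM0 : M ≠ 0) (N : ℕ) :
    ∃ r y k : ℕ, N < r ∧ r.Prime ∧ y % 12 = 5 ∧ ¬ 5 ∣ y ∧ M ∣ y ∧ y ^ n + 7 = 12 * k ∧
      r ∣ k ^ 2 + 4 ∧ ¬ r ^ 2 ∣ k ^ 2 + 4 := by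
  obtain ⟨r, hrN, hrp, hr4, hrc⟩ := exists_prime_r n hn hodd (N + 60 * M + n + 600)
  have := Fact.mk hrp
  obtain ⟨z, hz0, hz⟩ := exists_y0 n r (by omega) hr4 hrc
  have hM60 : Nat.Coprime 60 M := by
    have h2 : Nat.Coprime (30 ^ 2) M := hM.pow_left 2
    exact h2.coprime_dvd_left (by norm_num)
  obtain ⟨y', hy1, hy2⟩ := Nat.chineseRemainder hM60 41 0
  have hr60M : Nat.Coprime (60 * M) r := by
    apply Nat.Coprime.symm
    rw [hrp.coprime_iff_not_dvd]
    intro h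
    have := Nat.le_of_dvd (by positivity) h
    omega
  obtain ⟨y1, hy3, hy4⟩ := Nat.chineseRemainder hr60M y' z.val
  have hr1 : ∀ c : ℕ, (y1 + c * (60 * M * r)) ≡ 41 [MOD 60] ∧ M ∣ (y1 + c * (60 * M * r)) := by
    intro c
    constructor
    · have h1 : y1 ≡ 41 [MOD 60] := (hy3.of_mul_right M).trans hy1
      have h2 : c * (60 * M * r) ≡ 0 [MOD 60] :=
        (Nat.modEq_zero_iff_dvd).2 ⟨c * M * r, by ring⟩
      simpa using h1.add h2
    · have h1 : y1 ≡ 0 [MOD M] := (hy3.of_mul_left 60).trans hy2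
      exact dvd_add ((Nat.modEq_zero_iff_dvd).1 h1) ⟨c * 60 * r, by ring⟩
  have hy1z : (y1 : ZMod r) = z := by
    rw [(ZMod.natCast_eq_natCast_iff _ _ _).2 hy4, ZMod.natCast_zmod_val]
  have hrF : ∀ c : ℕ, (r : ℤ) ∣ (((y1 + c * (60 * M * r) : ℕ) : ℤ) ^ n + 7) ^ 2 + 576 := by
    intro c
    rw [← ZMod.intCast_zmod_eq_zero_iff_dvd]
    push_cast
    rw [hy1z, ZMod.natCast_self, mul_zero, mul_zero, add_zero]
    exact hz
  have hpr := Nat.prime_iff_prime_int.1 hrp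
  have hrsmall : ∀ m : ℕ, 0 < m → m < r → ¬ (r : ℤ) ∣ (m : ℤ) := by
    intro m hm hmr h
    have := Nat.le_of_dvd hm (Int.natCast_dvd_natCast.1 h)
    omega
  have hex : ∃ c : ℕ, ¬ ((r : ℤ) ^ 2 ∣ (((y1 + c * (60 * M * r) : ℕ) : ℤ) ^ n + 7) ^ 2 + 576) := by
    by_contra! hcon
    have h0 := hcon 0
    have h1 := hcon 1
    have hF0 := hrF 0
    simp only [zero_mul, add_zero, one_mul] at h0 h1 hF0
    obtain ⟨k, hk⟩ := Polynomial.powAddExpansion (y1 : ℤ) ((60 * M * r : ℕ) : ℤ) n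
    rw [Nat.cast_add, hk] at h1
    set A : ℤ := (y1 : ℤ) ^ n + 7 with hA
    set D : ℤ := (n * (y1 : ℤ) ^ (n - 1) + k * (60 * M * r)) * (60 * M) with hD
    have hdiv : (r : ℤ) ^ 2 ∣ (r * D) * (2 * A + r * D) := by
      have := dvd_sub h1 h0
      refine this.trans (dvd_of_eq ?_)
      rw [hD, hA]; push_cast; ring
    have hA0 : ¬ (r : ℤ) ∣ A := by
      intro h
      have h2 : (r : ℤ) ∣ 576 := (dvd_add_right (h.trans (dvd_pow_self A two_ne_zero))).1 hF0
      exact hrsmall 576 (by norm_num) (by omega) h2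
    have hD0 : (r : ℤ) ∣ D := by
      rw [pow_two, mul_assoc] at hdiv
      have h2 := Int.dvd_of_mul_dvd_mul_left (by exact_mod_cast hrp.ne_zero) hdiv
      rcases hpr.dvd_or_dvd h2 with h | h
      · exact h
      · exfalso
        rw [dvd_add_left (dvd_mul_right _ _)] at h
        rcases hpr.dvd_or_dvd h with h | h
        · exact hrsmall 2 (by norm_num) (by omega) h
        · exact hA0 h
    rcases hpr.dvd_or_dvd hD0 with h | h
    · rw [dvd_add_left ⟨k * (60 * M), by ring⟩] at h
      rcases hpr.dvd_or_dvd h with h | h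
      · exact hrsmall n (by omega) (by omega) h
      · have h3 := hpr.dvd_of_dvd_pow h
        rw [← ZMod.intCast_zmod_eq_zero_iff_dvd] at h3
        apply hz0
        rw [← hy1z]; exact_mod_cast h3
    · exact hrsmall (60 * M) (by positivity) (by omega) (by exact_mod_cast h)
  obtain ⟨c, hc⟩ := hex
  set y := y1 + c * (60 * M * r) with hy
  obtain ⟨h41, hMy⟩ := hr1 c
  have h12 : y % 12 = 5 := by
    have : y % 60 = 41 := h41
    omega
  have h5 : ¬ 5 ∣ y := by
    have : y % 60 = 41 := h41
    omega
  obtain ⟨k, hk⟩ := pow_mod12 n y hodd h12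
  have hkZ : (y : ℤ) ^ n + 7 = 12 * k := by exact_mod_cast hk
  have hF : ((y : ℤ) ^ n + 7) ^ 2 + 576 = 144 * ((k ^ 2 + 4 : ℕ) : ℤ) := by
    rw [hkZ]; push_cast; ring
  refine ⟨r, y, k, by omega, hrp, h12, h5, hMy, hk, ?_, ?_⟩
  · have := hrF c
    rw [← hy, hF] at this
    rcases hpr.dvd_or_dvd this with h | h
    · exact absurd h (hrsmall 144 (by norm_num) (by omega))
    · exact Int.natCast_dvd_natCast.1 h
  · intro h
    apply hc
    rw [hF]
    exact (by exact_mod_cast h : (r : ℤ) ^ 2 ∣ ((k ^ 2 + 4 : ℕ) : ℤ)).mul_left _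
end CQ

namespace CQ

/-- The square root of `k ^ 2 + 4` inside the cyclic quartic field. -/
def dl {L : Type*} [Field L] (k : ℕ) (x : L) : L := x - 1 / x + k

lemma dl_sq {L : Type*} [Field L] [CharZero L] {k : ℕ} {x : L} (hx : Rt k x) :
    dl k x ^ 2 = (k : L) ^ 2 + 4 := by
  have := hx.ne_zero
  unfold dl
  field_simp
  unfold Rt at hx
  linear_combination hx

lemma dl_mob {L : Type*} [Field L] [CharZero L] {k : ℕ} {x : L} (hx : Rt k x) :
    dl k (mob x) = - dl k x := by
  have := hx.ne_zero
  have := hx.add_one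
  have := hx.sub_one
  unfold dl mob
  field_simp
  unfold Rt at hx
  linear_combination hx

lemma same_field {K : Type*} [Field K] [NumberField K] [IsGalois ℚ K] {k1 k2 : ℕ} {x1 x2 : K}
    {s1 s2 : K ≃ₐ[ℚ] K} (h1 : Rt k1 x1) (h2 : Rt k2 x2) (hs1 : s1 x1 = mob x1) (hs2 : s2 x2 = mob x2)
    (hg : ∀ g, g ∈ Subgroup.zpowers s1) :
    ∃ q : ℚ, q ^ 2 = ((k1 : ℚ) ^ 2 + 4) * ((k2 : ℚ) ^ 2 + 4) := by
  have hmap : ∀ (s : K ≃ₐ[ℚ] K) (k : ℕ) (x : K), s (dl k x) = dl k (s x) := by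
    intro s k x; simp [dl]
  have hfix : ∀ w : K, s1 w = w → ∀ g : K ≃ₐ[ℚ] K, g w = w := by
    intro w hw g
    have hle : Subgroup.zpowers s1 ≤ MulAction.stabilizer (K ≃ₐ[ℚ] K) w := by
      rw [Subgroup.zpowers_le]; exact hw
    exact hle (hg g)
  have d1 : s1 (dl k1 x1) = - dl k1 x1 := by rw [hmap, hs1, dl_mob h1]
  have d2 : s2 (dl k2 x2) = - dl k2 x2 := by rw [hmap, hs2, dl_mob h2]
  have hpos : ∀ k : ℕ, ((k : K) ^ 2 + 4) ≠ 0 := fun k => by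
    exact_mod_cast (show k ^ 2 + 4 ≠ 0 by positivity)
  have hne : dl k2 x2 ≠ 0 := by
    intro h
    have := dl_sq h2
    rw [h] at this
    exact hpos k2 (by rw [← this]; ring)
  have d12 : s1 (dl k2 x2) = - dl k2 x2 := by
    have hsq : (s1 (dl k2 x2)) ^ 2 = (dl k2 x2) ^ 2 := by
      rw [← map_pow, dl_sq h2, map_add, map_pow, map_natCast, map_ofNat]
    rcases sq_eq_sq_iff_eq_or_eq_neg.1 hsq with h | h
    · exfalso
      have := hfix _ h s2
      rw [d2] at this
      exact hne (self_eq_neg.1 this.symm)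
    · exact h
  have hprod : s1 (dl k1 x1 * dl k2 x2) = dl k1 x1 * dl k2 x2 := by
    rw [map_mul, d1, d12]; ring
  obtain ⟨q, hq⟩ := (IsGalois.mem_bot_iff_fixed (F := ℚ) (dl k1 x1 * dl k2 x2)).2 (hfix _ hprod)
  refine ⟨q, ?_⟩
  apply (algebraMap ℚ K).injective
  have hq' : algebraMap ℚ K q = dl k1 x1 * dl k2 x2 := hq
  rw [map_pow, hq', mul_pow, dl_sq h1, dl_sq h2]
  simp


lemma not_square {r a b : ℕ} (hr : r.Prime) (ha : ¬ r ∣ a) (hb : r ∣ b) (hb2 : ¬ r ^ 2 ∣ b) (q : ℚ)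
    (hq : q ^ 2 = (a : ℚ) * b) : False := by
  have hsq : IsSquare (((a * b : ℕ) : ℚ)) := ⟨q, by push_cast; rw [← hq]; ring⟩
  rw [Rat.isSquare_natCast_iff] at hsq
  obtain ⟨w, hw⟩ := hsq
  have h1 : r ∣ w := by
    have : r ∣ w * w := by rw [← hw]; exact hb.mul_left a
    rcases hr.dvd_mul.1 this with h | h <;> exact h
  have h2 : r ^ 2 ∣ a * b := by
    rw [hw, pow_two]; exact Nat.mul_dvd_mul h1 h1
  exact hb2 ((Nat.Coprime.dvd_of_dvd_mul_left
    (((hr.coprime_iff_not_dvd).2 ha).pow_left 2)) h2)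

/-- The properties of the field provided by `field_exists`. -/
def FP (k : ℕ) (K : IntermediateField ℚ ℂ) : Prop :=
  NumberField K ∧
    Irreducible (pol k) ∧ (pol k).IsSplittingField ℚ K ∧ Module.finrank ℚ K = 4 ∧ IsGalois ℚ K ∧
    Nonempty ((K ≃ₐ[ℚ] K) ≃* Multiplicative (ZMod 4)) ∧ TotallyReal K ∧
    ∃ (x : K) (σ : K ≃ₐ[ℚ] K), Rt k x ∧ σ x * (x + 1) = x - 1 ∧ (∀ g, g ∈ Subgroup.zpowers σ) ∧
      ∀ (L : Type) [Field L] [Algebra ℚ L] (z : L), Rt k z → ∃ f : K →ₐ[ℚ] L, f x = z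

lemma FP.square {k1 k2 : ℕ} {K : IntermediateField ℚ ℂ} (h1 : FP k1 K) (h2 : FP k2 K) :
    ∃ q : ℚ, q ^ 2 = ((k1 : ℚ) ^ 2 + 4) * ((k2 : ℚ) ^ 2 + 4) := by
  obtain ⟨i1, -, -, -, i2, -, -, x1, s1, r1, m1, g1, -⟩ := h1
  obtain ⟨-, -, -, -, -, -, -, x2, s2, r2, m2, -, -⟩ := h2
  exact same_field r1 r2 (eq_div_of_mul_eq r1.add_one m1) (eq_div_of_mul_eq r2.add_one m2) g1

lemma iso_eq {K K' : IntermediateField ℚ ℂ} [IsGalois ℚ K] (e : K ≃+* K') : K = K' := by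
  have hN : Normal ℚ K := IsGalois.to_normal
  have e0 : (IntermediateField.algebra' K : Algebra ℚ K) = DivisionRing.toRatAlgebra :=
    Subsingleton.elim _ _
  have hN' : @Normal ℚ K _ _ (IntermediateField.algebra' K) := by rw [e0]; exact hN
  let g : K →+* ℂ := (algebraMap K' ℂ).comp e.toRingHom
  let f : @AlgHom ℚ K ℂ _ _ _ (IntermediateField.algebra' K) _ :=
    @AlgHom.mk ℚ K ℂ _ _ _ (IntermediateField.algebra' K) _ g (fun r => by
      simp only [eq_ratCast, map_ratCast, RingHom.toMonoidHom_eq_coe, OneHom.toFun_eq_coe,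
        MonoidHom.toOneHom_coe, MonoidHom.coe_coe])
  have h1 : @AlgHom.fieldRange ℚ K ℂ _ _ _ (IntermediateField.algebra' K) _ f = K :=
    @AlgHom.fieldRange_of_normal ℚ ℂ _ _ _ K hN' f
  rw [← h1]
  apply le_antisymm
  · rintro _ ⟨z, rfl⟩
    exact (e z).2
  · intro w hw
    refine ⟨e.symm ⟨w, hw⟩, ?_⟩
    change ((e (e.symm ⟨w, hw⟩) : K') : ℂ) = w
    rw [e.apply_symm_apply]

/-- The product of the auxiliary primes. -/
noncomputable def MM (n : ℕ) : ℕ := ∏ p ∈ n.primeFactors, ∏ q ∈ Qset p, q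

lemma MM_spec (n : ℕ) : Nat.Coprime 30 (MM n) ∧ MM n ≠ 0 ∧
    ∀ p ∈ n.primeFactors, ∀ q ∈ Qset p, q ∣ MM n := by
  refine ⟨?_, ?_, ?_⟩
  · refine Nat.Coprime.prod_right fun p hp => Nat.Coprime.prod_right fun q hq => ?_
    have := (Qset_spec p (Nat.prime_of_mem_primeFactors hp)).1 q hq
    exact ((this.1.coprime_iff_not_dvd).2 this.2).symm
  · refine Finset.prod_ne_zero_iff.2 fun p hp => Finset.prod_ne_zero_iff.2 fun q hq => ?_
    exact ((Qset_spec p (Nat.prime_of_mem_primeFactors hp)).1 q hq).1.ne_zero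
  · intro p hp q hq
    exact (Finset.dvd_prod_of_mem (fun q => q) hq).trans
      (Finset.dvd_prod_of_mem (fun p => ∏ q ∈ Qset p, q) hp)

/-- The set of fields used. -/
def SS (n : ℕ) : Set (IntermediateField ℚ ℂ) :=
  {K | ∃ y k : ℕ, (y % 12 = 5 ∧ ¬ 5 ∣ y ∧ MM n ∣ y ∧ y ^ n + 7 = 12 * k) ∧ FP k K}

lemma SS_infinite (n : ℕ) (hn : 1 < n) (hodd : Odd n) : (SS n).Infinite := by
  intro hfin
  have hch : ∀ K : IntermediateField ℚ ℂ, ∃ k : ℕ, K ∈ SS n → FP k K := by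
    intro K
    by_cases h : K ∈ SS n
    · obtain ⟨y, k, -, h⟩ := h
      exact ⟨k, fun _ => h⟩
    · exact ⟨0, fun h' => absurd h' h⟩
  choose κ hκ using hch
  obtain ⟨r, y, k, hr, hrp, h12, h5, hM, hk, hd, hd2⟩ := choose_y n hn hodd (MM n) (MM_spec n).1
    (MM_spec n).2.1 (∑ K ∈ hfin.toFinset, (κ K ^ 2 + 4))
  obtain ⟨K, hK⟩ := field_exists k (by omega)
  have hKS : K ∈ SS n := ⟨y, k, ⟨h12, h5, hM, hk⟩, hK⟩
  obtain ⟨q, hq⟩ := (hκ K hKS).square hK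
  have hle : κ K ^ 2 + 4 ≤ ∑ K ∈ hfin.toFinset, (κ K ^ 2 + 4) :=
    Finset.single_le_sum (f := fun K => κ K ^ 2 + 4) (fun _ _ => Nat.zero_le _)
      (hfin.mem_toFinset.2 hKS)
  refine not_square (a := κ K ^ 2 + 4) (b := k ^ 2 + 4) hrp ?_ hd hd2 q (by push_cast; exact hq)
  intro h
  have := Nat.le_of_dvd (by positivity) h
  omega

end CQ

/-- **Cyclic quartic fields with large class group (`G = ℤ/4ℤ`).**
For every odd integer `n > 1` there are infinitely many pairwise non-isomorphic totally
real cyclic quartic fields `K`, each a splitting field of an irreducible polynomial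
`x⁴ + ((yⁿ + 7)/6)x³ - 6x² - ((yⁿ + 7)/6)x + 1` with `y` a positive integer,
`y ≡ 5 (mod 12)` and `5 ∤ y`, such that `rank_n Cl(K) ≥ 3`. -/
theorem cyclic_quartic_large_class_group (n : ℕ) (hn : 1 < n) (hodd : Odd n) :
    ∃ S : Set (IntermediateField ℚ ℂ), S.Infinite ∧
      (∀ K ∈ S, ∀ K' ∈ S, K ≠ K' → IsEmpty (K ≃+* K')) ∧
      ∀ K ∈ S, ∃ y : ℕ, 0 < y ∧ y % 12 = 5 ∧ ¬ (5 ∣ y) ∧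
        (let P : Polynomial ℚ := X ^ 4 + C (((y : ℚ) ^ n + 7) / 6) * X ^ 3 - C 6 * X ^ 2 -
          C (((y : ℚ) ^ n + 7) / 6) * X + 1
         Irreducible P ∧ P.IsSplittingField ℚ K) ∧
        NumberField K ∧ Module.finrank ℚ K = 4 ∧ IsGalois ℚ K ∧
        Nonempty ((K ≃ₐ[ℚ] K) ≃* Multiplicative (ZMod 4)) ∧
        TotallyReal K ∧
        HasZModRankGE (ClassGroup (𝓞 K)) n 3 := by
  refine ⟨CQ.SS n, CQ.SS_infinite n hn hodd, ?_, ?_⟩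
  · rintro K ⟨y, k, -, hK⟩ K' - hne
    have := hK.2.2.2.2.1
    exact ⟨fun e => hne (CQ.iso_eq e)⟩
  · rintro K ⟨y, k, ⟨h12, h5, hM, hk⟩, hK⟩
    obtain ⟨i1, hirr, hsplit, h4, hgal, hZ, hT, x, s, hx, hs, -, hlift⟩ := hK
    refine ⟨y, by omega, h12, h5, ?_, i1, h4, hgal, hZ, hT, ?_⟩
    · have hc : ((y : ℚ) ^ n + 7) / 6 = 2 * (k : ℚ) := by
        have : (y : ℚ) ^ n + 7 = 12 * k := by exact_mod_cast hk
        rw [this]; ring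
      simp only [hc]
      exact ⟨hirr, hsplit⟩
    · exact CQ.class_rank n (by omega) hodd k y hk (by omega) h5
        (fun p hp q hq => ((CQ.MM_spec n).2.2 p hp q hq).trans hM) K hT h4 x s
        (eq_div_of_mul_eq hx.add_one hs) hx hlift
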